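/- arXiv:2407.19693 — 4 statements merged into one kernel-verified Lean document; each statement's English description precedes it below -/
import Mathlib

section
/- Let k ≥ 2 and n ≥ 2k+1, and let J = (2, …, 2, 3) have k−1 entries equal to 2 followed by one entry 3 (entries summing to 2k+1). Then a 2k-element subset F of [n] is contained in exactly one facet of Γ^J_n (i.e., F is a facet of D(n,2k−1)) if and only if F has one of the following forms: (1) F = τ ∪ {i, i+2} for some i with i+2 ≤ n and some facet τ of B([1, i−1], 2k−3); (2) F = τ ∪ {n−1, n} for some facet τ of B([1, n−2], 2k−3); (3) F = τ ∪ {1, i, i+1, i+2} for some i with 2 ≤ i ≤ n−2 and some facet τ of B([2, i−1], 2k−5). -/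
/-- `F` is a facet of `Γ^J_n`: `F = I_1 ∪ … ∪ I_m ⊆ [n]`, where `I_t` is the interval
of `J t` consecutive integers starting at `st t`, and `max I_t < min I_{t'}` for `t < t'`. -/
def GammaFacet (n m : ℕ) (J : Fin m → ℕ) (F : Finset ℕ) : Prop :=
  ∃ st : Fin m → ℕ,
    (∀ t, 1 ≤ st t ∧ st t + J t ≤ n + 1) ∧
    (∀ t t' : Fin m, t < t' → st t + J t ≤ st t') ∧
    F = Finset.univ.biUnion fun t => Finset.Ico (st t) (st t + J t)

/-- `F` is a facet of `B([a,b], 2k-1)`: `F = {i_1, i_1+1, …, i_k, i_k+1}` with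
`a ≤ i_j`, `i_j + 1 < i_{j'}` for `j < j'`, and `i_j + 1 ≤ b`. For `k = 0` the unique
facet is `∅` (the convention `B([a,b],-1) = {∅}`). -/
def BFacet (a b k : ℕ) (F : Finset ℕ) : Prop :=
  ∃ i : Fin k → ℕ,
    (∀ j, a ≤ i j ∧ i j + 1 ≤ b) ∧
    (∀ j j' : Fin k, j < j' → i j + 1 < i j') ∧
    F = Finset.univ.biUnion fun j => {i j, i j + 1}

/-!
Write `k = m + 1`. A facet of `Γ^J_n` containing `F` is `F ∪ {x}` for a new vertex `x`, so the
question is when exactly one `x` works. List `F` as `f 0 < ⋯ < f (2 * m + 1)`. If `F ∪ {x}` is `m`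
pairs followed by a triple, then either `x` is the missing middle of the triple, and it is the only
choice, or `x` is adjacent to some pivot `f (2 * q)`: the terms before the pivot, and those after
it except the last, split into pairs of consecutive integers, and `f (2 * m + 1) = f (2 * m) + 1`.

The pivots form an interval of indices. Only the smallest one can be extended downwards and only
the largest one upwards (past `f (2 * m + 1)` if it is `f (2 * m)`), since every other neighbour of
a pivot is already in `F`. Hence there are always two extensions, unless the smallest pivot is
`f 0 = 1` or the largest is `f (2 * m)` with `f (2 * m + 1) = n`; both cannot happen at once, as
then `F = [n]`, whereas `n > 2 * m + 2 = |F|`.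
-/

lemma insert_eq_insert_iff_of_forall_rel {α : Type*} [DecidableEq α] (r : α → α → Prop)
    [Std.Asymm r] {S T : Finset α} {u v : α} (hS : ∀ s ∈ S, r s u) (hT : ∀ t ∈ T, r t v) :
    insert u S = insert v T ↔ u = v ∧ S = T := by
  refine ⟨fun h => ?_, by rintro ⟨rfl, rfl⟩; rfl⟩
  have irrefl (a : α) : ¬ r a a := fun ha => Std.Asymm.asymm a a ha ha
  have huv : u = v := by
    have hu : u = v ∨ u ∈ T := Finset.mem_insert.mp (h ▸ Finset.mem_insert_self u S)
    have hv : v = u ∨ v ∈ S := Finset.mem_insert.mp (h.symm ▸ Finset.mem_insert_self v T)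
    rcases hu with hu | hu
    · exact hu
    rcases hv with hv | hv
    · exact hv.symm
    · exact absurd (hT u hu) (Std.Asymm.asymm _ _ (hS v hv))
  subst huv
  refine ⟨rfl, ?_⟩
  rw [← Finset.erase_insert (s := S) fun hu => irrefl u (hS u hu), h,
    Finset.erase_insert fun hu => irrefl u (hT u hu)]

lemma existsUnique_superset_iff_existsUnique_insert {α : Type*} [DecidableEq α]
    {P : Finset α → Prop} {F : Finset α} (hP : ∀ G, P G → G.card = F.card + 1) :
    (∃! G, P G ∧ F ⊆ G) ↔ ∃! x, x ∉ F ∧ P (insert x F) := by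
  have hinsert {G : Finset α} (hG : P G) (hFG : F ⊆ G) : ∃ x ∉ F, insert x F = G :=
    Finset.exists_eq_insert_iff.mpr ⟨hFG, (hP G hG).symm⟩
  constructor
  · rintro ⟨G, ⟨hG, hFG⟩, hunique⟩
    obtain ⟨x, hx, rfl⟩ := hinsert hG hFG
    refine ⟨x, ⟨hx, hG⟩, fun y ⟨hy, hPy⟩ => ?_⟩
    exact (Finset.insert_inj hy).mp (hunique _ ⟨hPy, Finset.subset_insert y F⟩)
  · rintro ⟨x, ⟨-, hPx⟩, hunique⟩
    refine ⟨insert x F, ⟨hPx, Finset.subset_insert x F⟩, fun G ⟨hG, hFG⟩ => ?_⟩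
    obtain ⟨y, hy, rfl⟩ := hinsert hG hFG
    rw [hunique y ⟨hy, hG⟩]

/-! ### Increasing enumerations -/

section Enumeration

variable {α : Type*} [LinearOrder α] {f : ℕ → α} {m p : ℕ} {S : Finset α} {u x : α}

/-- `f` lists the elements of `S` in increasing order as `f 0 < f 1 < ⋯ < f (m - 1)`; the values
of `f` from `m` on are unconstrained. -/
structure Enumerates (f : ℕ → α) (m : ℕ) (S : Finset α) : Prop where
  strictMonoOn : StrictMonoOn f (Set.Iio m)
  image_range : (Finset.range m).image f = S

/-- Inserting `x` in front of `f p` keeps the sequence `f 0, …, f (m - 1)` increasing. -/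
structure IsPosition (f : ℕ → α) (m : ℕ) (x : α) (p : ℕ) : Prop where
  le : p ≤ m
  lt : ∀ i < p, f i < x
  gt : ∀ i, p ≤ i → i < m → x < f i

/-- The sequence `f 0, …, f (p - 1), x, f p, f (p + 1), …`. -/
def insertAt (f : ℕ → α) (p : ℕ) (x : α) (i : ℕ) : α :=
  if i < p then f i else if i = p then x else f (i - 1)

lemma exists_enumerates [Nonempty α] (S : Finset α) : ∃ f, Enumerates f S.card S := by
  obtain ⟨f, hf⟩ : ∃ f : ℕ → α, ∀ i : Fin S.card, f i = S.orderEmbOfFin rfl i :=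
    ⟨Function.extend Fin.val (S.orderEmbOfFin rfl) fun _ => Classical.arbitrary α,
      Fin.val_injective.extend_apply _ _⟩
  refine ⟨f, fun i hi j hj hij => ?_, Finset.coe_injective ?_⟩
  · simpa [← hf] using (S.orderEmbOfFin rfl).strictMono (a := ⟨i, hi⟩) (b := ⟨j, hj⟩) hij
  · rw [← S.range_orderEmbOfFin rfl]
    ext y
    simp only [Finset.coe_image, Finset.coe_range, Set.mem_image, Set.mem_Iio, Set.mem_range,
      Fin.exists_iff, ← hf, exists_prop]

namespace Enumerates

lemma mem_iff (hf : Enumerates f m S) : x ∈ S ↔ ∃ i < m, f i = x := by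
  simp [← hf.image_range]

lemma apply_mem (hf : Enumerates f m S) {i : ℕ} (hi : i < m) : f i ∈ S :=
  hf.mem_iff.mpr ⟨i, hi, rfl⟩

lemma subset_Ico_iff {f : ℕ → ℕ} {S : Finset ℕ} {a b : ℕ} (hf : Enumerates f m S) :
    S ⊆ Finset.Ico a b ↔ ∀ i < m, a ≤ f i ∧ f i < b := by
  simp [← hf.image_range, Finset.image_subset_iff]

lemma lt (hf : Enumerates f m S) {i j : ℕ} (hij : i < j) (hj : j < m) : f i < f j :=
  hf.strictMonoOn (hij.trans hj) hj hij

lemma le (hf : Enumerates f m S) {i j : ℕ} (hij : i ≤ j) (hj : j < m) : f i ≤ f j :=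
  hf.strictMonoOn.monotoneOn (hij.trans_lt hj) hj hij

lemma notMem_of_lt_first (hf : Enumerates f m S) (hx : x < f 0) : x ∉ S := by
  rw [hf.mem_iff]
  rintro ⟨i, hi, rfl⟩
  exact (hf.le i.zero_le hi).not_gt hx

lemma notMem_of_last_lt (hf : Enumerates f (m + 1) S) (hx : f m < x) : x ∉ S := by
  rw [hf.mem_iff]
  rintro ⟨i, hi, rfl⟩
  exact (hf.le (Nat.le_of_lt_succ hi) m.lt_succ_self).not_gt hx

lemma notMem_of_lt_of_lt (hf : Enumerates f m S) {i : ℕ} (hi : i + 1 < m) (hlt : f i < x)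
    (hgt : x < f (i + 1)) : x ∉ S := by
  rw [hf.mem_iff]
  rintro ⟨j, hj, rfl⟩
  rcases le_or_gt j i with hji | hij
  · exact (hf.le hji (Nat.lt_of_succ_lt hi)).not_gt hlt
  · exact (hf.le hij hj).not_gt hgt

lemma of_le (hf : Enumerates f m S) (hp : p ≤ m) : Enumerates f p ((Finset.range p).image f) :=
  ⟨hf.strictMonoOn.mono (Set.Iio_subset_Iio hp), rfl⟩

lemma tail (hf : Enumerates f (m + 1) S) :
    Enumerates (fun i => f (i + 1)) m ((Finset.range m).image fun i => f (i + 1)) :=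
  ⟨fun _ _ _ hj hij => hf.lt (Nat.succ_lt_succ hij) (Nat.succ_lt_succ hj), rfl⟩

lemma exists_eq_insert_iff_of_forall_lt (hf : Enumerates f (m + 1) S) {P : Finset α → Prop}
    (hP : ∀ T, P T → ∀ t ∈ T, t < u) :
    (∃ T, P T ∧ S = insert u T) ↔ P ((Finset.range m).image f) ∧ f m = u := by
  have hS : S = insert (f m) ((Finset.range m).image f) := by
    rw [← hf.image_range, Finset.range_add_one, Finset.image_insert]
  have hlast : ∀ s ∈ (Finset.range m).image f, s < f m := by
    simpa using fun i hi => hf.lt hi m.lt_succ_self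
  constructor
  · rintro ⟨T, hT, h⟩
    obtain ⟨hu, rfl⟩ :=
      (insert_eq_insert_iff_of_forall_rel (· < ·) hlast (hP T hT)).mp (hS.symm.trans h)
    exact ⟨hT, hu⟩
  · rintro ⟨hT, rfl⟩
    exact ⟨_, hT, hS⟩

lemma exists_eq_insert_iff_of_forall_gt (hf : Enumerates f (m + 1) S) {P : Finset α → Prop}
    (hP : ∀ T, P T → ∀ t ∈ T, u < t) :
    (∃ T, P T ∧ S = insert u T) ↔ f 0 = u ∧ P ((Finset.range m).image fun i => f (i + 1)) := by
  have hS : S = insert (f 0) ((Finset.range m).image fun i => f (i + 1)) := by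
    rw [← hf.image_range, Finset.range_add_one', Finset.image_insert, Finset.map_eq_image,
      Finset.image_image]
    rfl
  have hfirst : ∀ s ∈ (Finset.range m).image fun i => f (i + 1), s > f 0 := by
    simpa using fun i hi => hf.lt i.succ_pos (Nat.succ_lt_succ hi)
  constructor
  · rintro ⟨T, hT, h⟩
    obtain ⟨hu, rfl⟩ :=
      (insert_eq_insert_iff_of_forall_rel (· > ·) hfirst (hP T hT)).mp (hS.symm.trans h)
    exact ⟨hu, hT⟩
  · rintro ⟨rfl, hT⟩
    exact ⟨_, hT, hS⟩

lemma exists_eq_union_pair_iff (hf : Enumerates f (m + 2) S) {P : Finset α → Prop} {v : α}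
    (huv : u < v) (hP : ∀ T, P T → ∀ t ∈ T, t < u) :
    (∃ T, P T ∧ S = T ∪ {u, v}) ↔ P ((Finset.range m).image f) ∧ f m = u ∧ f (m + 1) = v := by
  have hunion (T : Finset α) : T ∪ {u, v} = insert v (insert u T) := by
    rw [Finset.union_insert, Finset.union_singleton, Finset.insert_comm]
  have hlt : ∀ T', (∃ T, P T ∧ T' = insert u T) → ∀ t ∈ T', t < v := by
    rintro _ ⟨T, hT, rfl⟩
    exact (Finset.forall_mem_insert _ _ _).mpr ⟨huv, fun t ht => (hP T hT t ht).trans huv⟩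
  calc (∃ T, P T ∧ S = T ∪ {u, v})
      ↔ ∃ T', (∃ T, P T ∧ T' = insert u T) ∧ S = insert v T' := by simp [hunion]
    _ ↔ (∃ T, P T ∧ (Finset.range (m + 1)).image f = insert u T) ∧ f (m + 1) = v :=
      hf.exists_eq_insert_iff_of_forall_lt hlt
    _ ↔ P ((Finset.range m).image f) ∧ f m = u ∧ f (m + 1) = v := by
      rw [(hf.of_le (m + 1).le_succ).exists_eq_insert_iff_of_forall_lt hP, and_assoc]

lemma exists_isPosition (hf : Enumerates f m S) (hx : x ∉ S) : ∃ p, IsPosition f m x p := by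
  have hex : ∃ p, m ≤ p ∨ x < f p := ⟨m, .inl le_rfl⟩
  refine ⟨Nat.find hex, Nat.find_min' hex (.inl le_rfl), fun i hi => ?_, fun i hi him => ?_⟩
  · obtain ⟨him, hle⟩ := not_or.mp (Nat.find_min hex hi)
    exact (not_lt.mp hle).lt_of_ne fun h => hx (h ▸ hf.apply_mem (not_le.mp him))
  · exact ((Nat.find_spec hex).resolve_left (by omega)).trans_le (hf.le hi him)

end Enumerates

lemma Enumerates.insertAt_of_isPosition (hf : Enumerates f m S) (hp : IsPosition f m x p) :
    Enumerates (insertAt f p x) (m + 1) (insert x S) where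
  strictMonoOn i hi j hj hij := by
    have hpm := hp.le
    have hmono := @hf.lt
    have hlt := hp.lt
    have hgt := hp.gt
    simp only [Set.mem_Iio] at hi hj
    grind [insertAt]
  image_range := by
    ext y
    simp only [Finset.mem_image, Finset.mem_range, Finset.mem_insert, hf.mem_iff]
    have hpm := hp.le
    constructor
    · grind [insertAt]
    · rintro (rfl | ⟨i, hi, rfl⟩)
      · exact ⟨p, by omega, by simp [insertAt]⟩
      · by_cases hip : i < p
        · exact ⟨i, by omega, by simp [insertAt, hip]⟩
        · exact ⟨i + 1, by omega, by grind [insertAt]⟩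

end Enumeration

/-! ### Unions of intervals -/

/-- `S` is the union of `m` intervals of consecutive integers inside `[a, b)`, pairwise disjoint and
listed from left to right, the `t`-th one having length `J t`. Taking the upper bound exclusive
makes a set of intervals to the left of a further interval starting at `i` one inside `[a, i)`. -/
def IsIntervalUnion (a b m : ℕ) (J : Fin m → ℕ) (S : Finset ℕ) : Prop :=
  ∃ st : Fin m → ℕ,
    (∀ t, a ≤ st t ∧ st t + J t ≤ b) ∧
    (∀ t t' : Fin m, t < t' → st t + J t ≤ st t') ∧
    S = Finset.univ.biUnion fun t => Finset.Ico (st t) (st t + J t)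

/-- The interval lengths `(2, …, 2, 3)`, with `m` entries equal to `2`. -/
def twosThree (m : ℕ) (t : Fin (m + 1)) : ℕ := if t.val = m then 3 else 2

/-- The consecutive pairs of indices partitioning `[a, b)`, namely `(a, a + 1)`, `(a + 2, a + 3)`,
…, all carry consecutive values of `f`. Only used when `b - a` is even. -/
def PairedOn (f : ℕ → ℕ) (a b : ℕ) : Prop :=
  ∀ i, a ≤ i → i < b → i % 2 = a % 2 → f (i + 1) = f i + 1

/-- The value pattern of an increasing enumeration of `m` pairs followed by a triple. -/
def IsTwosThree (f : ℕ → ℕ) (m : ℕ) : Prop :=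
  PairedOn f 0 (2 * m + 2) ∧ f (2 * m + 2) = f (2 * m + 1) + 1

section IntervalUnion

variable {a b i m : ℕ} {S : Finset ℕ} {f : ℕ → ℕ}

lemma pair_eq_Ico (i : ℕ) : ({i, i + 1} : Finset ℕ) = Finset.Ico i (i + 2) := by
  ext
  simp only [Finset.mem_insert, Finset.mem_singleton, Finset.mem_Ico]
  omega

lemma bFacet_iff_isIntervalUnion :
    BFacet a b m S ↔ IsIntervalUnion a (b + 1) m (fun _ => 2) S := by
  simp only [BFacet, IsIntervalUnion, pair_eq_Ico]
  grind

lemma bFacet_pred_iff_isIntervalUnion :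
    BFacet a (i - 1) m S ↔ IsIntervalUnion a i m (fun _ => 2) S := by
  rw [bFacet_iff_isIntervalUnion]
  rcases i with _ | i
  · simp only [IsIntervalUnion]
    grind
  · rfl

lemma gammaFacet_iff_isIntervalUnion {n : ℕ} {J : Fin m → ℕ} :
    GammaFacet n m J S ↔ IsIntervalUnion 1 (n + 1) m J S :=
  Iff.rfl

lemma IsIntervalUnion.subset_Ico {J : Fin m → ℕ} (hS : IsIntervalUnion a b m J S) :
    S ⊆ Finset.Ico a b := by
  obtain ⟨st, hbound, -, rfl⟩ := hS
  exact Finset.biUnion_subset.mpr fun t _ =>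
    Finset.Ico_subset_Ico (hbound t).1 (hbound t).2

lemma IsIntervalUnion.lt_of_mem {J : Fin m → ℕ} (hS : IsIntervalUnion a b m J S) {t : ℕ}
    (ht : t ∈ S) : t < b :=
  (Finset.mem_Ico.mp (hS.subset_Ico ht)).2

lemma IsIntervalUnion.card_eq {J : Fin m → ℕ} (hS : IsIntervalUnion a b m J S) :
    S.card = ∑ t, J t := by
  obtain ⟨st, -, hsep, rfl⟩ := hS
  rw [Finset.card_biUnion]
  · simp
  · intro t _ t' _ htt'
    rcases htt'.lt_or_gt with hlt | hlt
    · exact Finset.Ico_disjoint_Ico_consecutive _ _ _ |>.mono_right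
        (Finset.Ico_subset_Ico_left (hsep t t' hlt))
    · exact (Finset.Ico_disjoint_Ico_consecutive _ _ _ |>.mono_right
        (Finset.Ico_subset_Ico_left (hsep t' t hlt))).symm

lemma isIntervalUnion_succ_iff {J : Fin (m + 1) → ℕ} :
    IsIntervalUnion a b (m + 1) J S ↔
      ∃ i T, a ≤ i ∧ i + J (Fin.last m) ≤ b ∧
        IsIntervalUnion a i m (J ∘ Fin.castSucc) T ∧
        S = T ∪ Finset.Ico i (i + J (Fin.last m)) := by
  have hunion (st : Fin (m + 1) → ℕ) :
      (Finset.univ.biUnion fun t => Finset.Ico (st t) (st t + J t)) =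
        (Finset.univ.biUnion fun t : Fin m =>
          Finset.Ico (st t.castSucc) (st t.castSucc + J t.castSucc)) ∪
        Finset.Ico (st (Fin.last m)) (st (Fin.last m) + J (Fin.last m)) := by
    ext y
    simp only [Finset.mem_biUnion, Finset.mem_univ, true_and, Finset.mem_union,
      Fin.exists_fin_succ']
  constructor
  · rintro ⟨st, hbound, hsep, rfl⟩
    refine ⟨st (Fin.last m), _, (hbound _).1, (hbound _).2, ⟨fun t => st t.castSucc,
      fun t => ⟨(hbound _).1, hsep _ _ t.castSucc_lt_last⟩, fun t t' htt' => hsep _ _ htt', rfl⟩,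
      hunion st⟩
  · rintro ⟨i, -, hai, hib, ⟨st, hbound, hsep, rfl⟩, rfl⟩
    refine ⟨Fin.snoc st i, Fin.forall_fin_succ'.mpr ⟨fun t => ?_, ?_⟩, ?_, ?_⟩
    · simpa using ⟨(hbound t).1, ((hbound t).2.trans (Nat.le_add_right _ _)).trans hib⟩
    · simpa using ⟨hai, hib⟩
    · simp only [Fin.forall_fin_succ', Fin.snoc_castSucc, Fin.snoc_last,
        Fin.castSucc_lt_castSucc_iff]
      exact ⟨fun t => ⟨hsep t, fun _ => (hbound t).2⟩,
        fun t ht => absurd ht t.castSucc_lt_last.not_gt, fun h => absurd h (lt_irrefl _)⟩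
    · simp [hunion]

lemma sum_twosThree (m : ℕ) : ∑ t, twosThree m t = 2 * m + 3 := by
  simp [Fin.sum_univ_castSucc, twosThree, Fin.is_lt, ne_of_lt, mul_comm]

lemma twosThree_last (m : ℕ) : twosThree m (Fin.last m) = 3 :=
  if_pos rfl

lemma twosThree_comp_castSucc (m : ℕ) : twosThree m ∘ Fin.castSucc = fun _ => 2 := by
  funext t
  simp [twosThree, t.is_lt.ne]

lemma pairedOn_iff_of_le {c : ℕ} (hab : a ≤ b) (hbc : b ≤ c) (hparity : b % 2 = a % 2) :
    PairedOn f a c ↔ PairedOn f a b ∧ PairedOn f b c := by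
  unfold PairedOn
  grind

lemma pairedOn_add_two_iff (hab : a ≤ b) (hparity : b % 2 = a % 2) :
    PairedOn f a (b + 2) ↔ PairedOn f a b ∧ f (b + 1) = f b + 1 := by
  unfold PairedOn
  grind

lemma PairedOn.mono {a' b' : ℕ} (h : PairedOn f a b) (ha : a ≤ a') (hb : b' ≤ b)
    (hparity : a' % 2 = a % 2) : PairedOn f a' b' :=
  fun i hai hib hi => h i (ha.trans hai) (hib.trans_le hb) (hi.trans hparity)

lemma pairedOn_comp_add_one_iff :
    PairedOn (fun i => f (i + 1)) a b ↔ PairedOn f (a + 1) (b + 1) := by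
  constructor
  · intro h i hai hib hi
    obtain ⟨i, rfl⟩ : ∃ j, i = j + 1 := ⟨i - 1, by omega⟩
    exact h i (by omega) (by omega) (by omega)
  · exact fun h i hai hib hi => h (i + 1) (by omega) (by omega) (by omega)

lemma isIntervalUnion_twos_iff (hf : Enumerates f (2 * m) S) :
    IsIntervalUnion a b m (fun _ => 2) S ↔ PairedOn f 0 (2 * m) ∧ S ⊆ Finset.Ico a b := by
  induction m generalizing b S with
  | zero =>
    obtain rfl : S = ∅ := hf.image_range.symm
    simp [IsIntervalUnion, PairedOn]
  | succ m ih =>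
    rw [mul_add_one] at hf ⊢
    have hinit := hf.of_le (Nat.le_add_right (2 * m) 2)
    calc IsIntervalUnion a b (m + 1) (fun _ => 2) S
        ↔ ∃ i, a ≤ i ∧ i + 2 ≤ b ∧
            ∃ T, IsIntervalUnion a i m (fun _ => 2) T ∧ S = T ∪ {i, i + 1} := by
          rw [isIntervalUnion_succ_iff]
          simp [pair_eq_Ico, Function.comp_def]
      _ ↔ ∃ i, a ≤ i ∧ i + 2 ≤ b ∧
            (PairedOn f 0 (2 * m) ∧ (Finset.range (2 * m)).image f ⊆ Finset.Ico a i) ∧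
            f (2 * m) = i ∧ f (2 * m + 1) = i + 1 := by
          refine exists_congr fun i => and_congr_right' (and_congr_right' ?_)
          rw [hf.exists_eq_union_pair_iff (Nat.lt_add_one i) fun T hT t => hT.lt_of_mem, ih hinit]
      _ ↔ PairedOn f 0 (2 * m + 2) ∧ S ⊆ Finset.Ico a b := by
          rw [pairedOn_add_two_iff (Nat.zero_le _) (by omega), hf.subset_Ico_iff]
          simp only [hinit.subset_Ico_iff, Nat.forall_lt_succ_right]
          constructor
          · rintro ⟨_, hai, hib, ⟨hpairs, hbound⟩, rfl, hlast⟩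
            exact ⟨⟨hpairs, hlast⟩,
              ⟨fun j hj => ⟨(hbound j hj).1, by grind⟩, by omega⟩, by omega⟩
          · rintro ⟨⟨hpairs, hlast⟩, ⟨hbound, hai, -⟩, hb⟩
            exact ⟨_, hai, by omega,
              ⟨hpairs, fun j hj => ⟨(hbound j hj).1, hf.lt hj (by omega)⟩⟩, rfl, hlast⟩

lemma isIntervalUnion_twosThree_iff (hf : Enumerates f (2 * m + 3) S) :
    IsIntervalUnion a b (m + 1) (twosThree m) S ↔
      IsTwosThree f m ∧ S ⊆ Finset.Ico a b := by
  have hinit := hf.of_le (Nat.le_add_right (2 * m) 3)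
  have hunion (T : Finset ℕ) (i : ℕ) :
      T ∪ Finset.Ico i (i + 3) = insert (i + 2) (T ∪ {i, i + 1}) := by
    rw [pair_eq_Ico, ← Finset.union_insert,
      Finset.insert_Ico_right_eq_Ico_add_one (Nat.le_add_right i 2)]
    rfl
  calc IsIntervalUnion a b (m + 1) (twosThree m) S
      ↔ ∃ i, a ≤ i ∧ i + 3 ≤ b ∧
          ∃ T', (∃ T, IsIntervalUnion a i m (fun _ => 2) T ∧ T' = T ∪ {i, i + 1}) ∧
            S = insert (i + 2) T' := by
        rw [isIntervalUnion_succ_iff, twosThree_comp_castSucc, twosThree_last]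
        simp [hunion]
    _ ↔ ∃ i, a ≤ i ∧ i + 3 ≤ b ∧
          ((PairedOn f 0 (2 * m) ∧ (Finset.range (2 * m)).image f ⊆ Finset.Ico a i) ∧
            f (2 * m) = i ∧ f (2 * m + 1) = i + 1) ∧ f (2 * m + 2) = i + 2 := by
        refine exists_congr fun i => and_congr_right' (and_congr_right' ?_)
        rw [hf.exists_eq_insert_iff_of_forall_lt,
          (hf.of_le (Nat.le_succ _)).exists_eq_union_pair_iff (Nat.lt_add_one i)
            fun T hT t => hT.lt_of_mem,
          isIntervalUnion_twos_iff hinit]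
        rintro _ ⟨T, hT, rfl⟩ t ht
        have hlt := @hT.lt_of_mem
        grind
    _ ↔ IsTwosThree f m ∧ S ⊆ Finset.Ico a b := by
        rw [IsTwosThree, pairedOn_add_two_iff (Nat.zero_le _) (by omega), hf.subset_Ico_iff]
        simp only [hinit.subset_Ico_iff, Nat.forall_lt_succ_right]
        constructor
        · rintro ⟨_, hai, hib, ⟨⟨hpairs, hbound⟩, rfl, hmid⟩, hlast⟩
          exact ⟨⟨⟨hpairs, hmid⟩, by omega⟩,
            ⟨⟨fun j hj => ⟨(hbound j hj).1, by grind⟩, by omega⟩, by omega⟩, by omega⟩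
        · rintro ⟨⟨⟨hpairs, hmid⟩, hlast⟩, ⟨⟨hbound, hai, -⟩, -⟩, hb⟩
          exact ⟨_, hai, by omega,
            ⟨⟨hpairs, fun j hj => ⟨(hbound j hj).1, hf.lt hj (by omega)⟩⟩, rfl, hmid⟩, by omega⟩

end IntervalUnion

/-! ### Extensions to a facet -/

/-- Pairing `f (2 * q)` with a new neighbour `f (2 * q) ± 1` turns `f 0 < ⋯ < f (2 * m + 1)` into
`m` pairs of consecutive integers followed by a triple. -/
structure IsPivot (f : ℕ → ℕ) (m q : ℕ) : Prop where
  le : q ≤ m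
  pairedOn_left : PairedOn f 0 (2 * q)
  pairedOn_right : PairedOn f (2 * q + 1) (2 * m + 1)
  last_eq : f (2 * m + 1) = f (2 * m) + 1

/-- `x` can be inserted directly below a pivot. -/
def IsLowerExtension (f : ℕ → ℕ) (m x : ℕ) : Prop :=
  ∃ q, IsPivot f m q ∧ x + 1 = f (2 * q)

/-- `x` can be inserted directly above a pivot, or, when the sequence consists of pairs of
consecutive integers, directly above its last term. -/
def IsUpperExtension (f : ℕ → ℕ) (m x : ℕ) : Prop :=
  (∃ q, IsPivot f m q ∧ x = f (2 * q) + 1) ∨ IsPivot f m m ∧ x = f (2 * m + 1) + 1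

/-- The last triple lacks exactly its middle element. -/
def HasFinalGap (f : ℕ → ℕ) (m : ℕ) : Prop :=
  PairedOn f 0 (2 * m) ∧ f (2 * m + 1) = f (2 * m) + 2

/-- `x` is a new vertex for which `F ∪ {x}` is a facet of `Γ^J_n`, where `J = (2, …, 2, 3)` has
`m` entries equal to `2`. -/
def IsExtension (m n : ℕ) (F : Finset ℕ) (x : ℕ) : Prop :=
  x ∉ F ∧ GammaFacet n (m + 1) (twosThree m) (insert x F)

section Extension

variable {f : ℕ → ℕ} {F : Finset ℕ} {a b m n p q x y : ℕ}

lemma isPivot_self_iff : IsPivot f m m ↔ PairedOn f 0 (2 * m + 2) := by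
  rw [pairedOn_add_two_iff (Nat.zero_le _) (by omega)]
  exact ⟨fun h => ⟨h.pairedOn_left, h.last_eq⟩, fun h => ⟨le_rfl, h.1, by grind [PairedOn], h.2⟩⟩

lemma pairedOn_insertAt_iff_of_le (hbp : b ≤ p) (hparity : b % 2 = a % 2) :
    PairedOn (insertAt f p x) a b ↔ PairedOn f a b := by
  refine forall₄_congr fun i _ _ _ => ?_
  simp [insertAt, show i < p by omega, show i + 1 < p by omega]

lemma pairedOn_insertAt_iff_of_ge (hpa : p ≤ a) :
    PairedOn (insertAt f p x) (a + 1) (b + 1) ↔ PairedOn f a b := by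
  rw [← pairedOn_comp_add_one_iff]
  refine forall₄_congr fun i _ _ _ => ?_
  simp [insertAt, show ¬ i + 1 < p by omega, show i + 1 ≠ p by omega,
    show ¬ i + 1 + 1 < p by omega, show i + 1 + 1 ≠ p by omega]

lemma pairedOn_insertAt_iff_of_eq_or_eq (hq : q ≤ m) (hp : p = 2 * q ∨ p = 2 * q + 1) :
    PairedOn (insertAt f p x) 0 (2 * m + 2) ↔
      PairedOn f 0 (2 * q) ∧ insertAt f p x (2 * q + 1) = insertAt f p x (2 * q) + 1 ∧
        PairedOn f (2 * q + 1) (2 * m + 1) := by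
  rw [pairedOn_iff_of_le (b := 2 * q + 2) (by omega) (by omega) (by omega),
    pairedOn_add_two_iff (by omega) (by omega), pairedOn_insertAt_iff_of_le (by omega) (by omega),
    pairedOn_insertAt_iff_of_ge (by omega), and_assoc]

lemma isTwosThree_insertAt_two_mul_iff (hq : q ≤ m) :
    IsTwosThree (insertAt f (2 * q) x) m ↔ IsPivot f m q ∧ x + 1 = f (2 * q) := by
  rw [IsTwosThree, pairedOn_insertAt_iff_of_eq_or_eq hq (.inl rfl)]
  grind [insertAt, IsPivot]

lemma isTwosThree_insertAt_two_mul_add_one_iff (hq : q < m) :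
    IsTwosThree (insertAt f (2 * q + 1) x) m ↔ IsPivot f m q ∧ x = f (2 * q) + 1 := by
  rw [IsTwosThree, pairedOn_insertAt_iff_of_eq_or_eq hq.le (.inr rfl)]
  grind [insertAt, IsPivot]

lemma isTwosThree_insertAt_penultimate_iff :
    IsTwosThree (insertAt f (2 * m + 1) x) m ↔ HasFinalGap f m ∧ x = f (2 * m) + 1 := by
  rw [IsTwosThree, pairedOn_insertAt_iff_of_eq_or_eq le_rfl (.inr rfl)]
  grind [insertAt, HasFinalGap, PairedOn]

lemma isTwosThree_insertAt_last_iff :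
    IsTwosThree (insertAt f (2 * m + 2) x) m ↔ IsPivot f m m ∧ x = f (2 * m + 1) + 1 := by
  rw [IsTwosThree, pairedOn_insertAt_iff_of_le le_rfl (by omega), isPivot_self_iff]
  simp [insertAt]

lemma Enumerates.isPosition_of_add_one_eq (hf : Enumerates f m F) (hx : x ∉ F) (hp : p < m)
    (h : x + 1 = f p) : IsPosition f m x p where
  le := hp.le
  lt _ hi := (Nat.le_of_lt_add_one ((hf.lt hi hp).trans_eq h.symm)).lt_of_ne fun hix =>
    hx (hix ▸ hf.apply_mem (hi.trans hp))
  gt _ hpi him := Nat.lt_of_add_one_le (h.trans_le (hf.le hpi him))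

lemma Enumerates.isPosition_of_eq_add_one (hf : Enumerates f m F) (hx : x ∉ F) (hp : p < m)
    (h : x = f p + 1) : IsPosition f m x (p + 1) where
  le := hp
  lt _ hi := h ▸ Nat.lt_succ_of_le (hf.le (Nat.le_of_lt_succ hi) hp)
  gt i hpi him := (h ▸ hf.lt hpi him : x ≤ f i).lt_of_ne fun hix => hx (hix ▸ hf.apply_mem him)

lemma gammaFacet_insert_iff (hf : Enumerates f (2 * m + 2) F)
    (hF : F ⊆ Finset.Icc 1 n) (hp : IsPosition f (2 * m + 2) x p) :
    GammaFacet n (m + 1) (twosThree m) (insert x F) ↔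
      x ∈ Finset.Icc 1 n ∧ IsTwosThree (insertAt f p x) m := by
  rw [gammaFacet_iff_isIntervalUnion, isIntervalUnion_twosThree_iff (hf.insertAt_of_isPosition hp),
    Finset.Ico_add_one_right_eq_Icc, Finset.insert_subset_iff, and_iff_left hF, and_comm]

lemma isExtension_iff (hf : Enumerates f (2 * m + 2) F) (hF : F ⊆ Finset.Icc 1 n) :
    IsExtension m n F x ↔ x ∉ F ∧ x ∈ Finset.Icc 1 n ∧
      (IsLowerExtension f m x ∨ IsUpperExtension f m x ∨
        HasFinalGap f m ∧ x = f (2 * m) + 1) := by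
  refine and_congr_right fun hx => ⟨fun hfacet => ?_, ?_⟩
  · obtain ⟨p, hp⟩ := hf.exists_isPosition hx
    obtain ⟨hmem, htwos⟩ := (gammaFacet_insert_iff hf hF hp).mp hfacet
    refine ⟨hmem, ?_⟩
    have hle := hp.le
    obtain ⟨q, rfl | rfl⟩ := p.even_or_odd'
    · rcases (show q ≤ m + 1 by omega).lt_or_eq with hq | rfl
      · exact .inl ⟨q, (isTwosThree_insertAt_two_mul_iff (by omega)).mp htwos⟩
      · exact .inr (.inl (.inr (isTwosThree_insertAt_last_iff.mp htwos)))
    · rcases (show q ≤ m by omega).lt_or_eq with hq | rfl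
      · exact .inr (.inl (.inl ⟨q, (isTwosThree_insertAt_two_mul_add_one_iff hq).mp htwos⟩))
      · exact .inr (.inr (isTwosThree_insertAt_penultimate_iff.mp htwos))
  · rintro ⟨hmem, ⟨q, hq, h⟩ | (⟨q, hq, h⟩ | h) | h⟩
    · have hp := hf.isPosition_of_add_one_eq hx (by linarith [hq.le]) h
      exact (gammaFacet_insert_iff hf hF hp).mpr
        ⟨hmem, (isTwosThree_insertAt_two_mul_iff hq.le).mpr ⟨hq, h⟩⟩
    · have hqm : q < m := hq.le.lt_of_ne fun hqm => hx <| by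
        subst hqm
        exact h.trans hq.last_eq.symm ▸ hf.apply_mem (Nat.lt_succ_self _)
      have hp := hf.isPosition_of_eq_add_one hx (by omega) h
      exact (gammaFacet_insert_iff hf hF hp).mpr
        ⟨hmem, (isTwosThree_insertAt_two_mul_add_one_iff hqm).mpr ⟨hq, h⟩⟩
    · have hp := hf.isPosition_of_eq_add_one hx (by omega) h.2
      exact (gammaFacet_insert_iff hf hF hp).mpr
        ⟨hmem, isTwosThree_insertAt_last_iff.mpr h⟩
    · have hp := hf.isPosition_of_eq_add_one hx (by omega) h.2
      exact (gammaFacet_insert_iff hf hF hp).mpr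
        ⟨hmem, isTwosThree_insertAt_penultimate_iff.mpr h⟩

lemma IsPivot.mem_of_add_one_eq (hp : IsPivot f m p) (hf : Enumerates f (2 * m + 2) F)
    (hpq : p < q) (hqm : q ≤ m) (hx : x + 1 = f (2 * q)) : x ∈ F := by
  obtain ⟨q, rfl⟩ := Nat.exists_eq_add_one_of_ne_zero (Nat.ne_zero_of_lt hpq)
  have hpair : f (2 * q + 2) = f (2 * q + 1) + 1 :=
    hp.pairedOn_right _ (by omega) (by omega) (by omega)
  rw [Nat.add_right_cancel (hx.trans hpair)]
  exact hf.apply_mem (by omega)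

lemma PairedOn.mem_of_eq_add_one (h : PairedOn f 0 (2 * q)) (hf : Enumerates f (2 * m + 2) F)
    (hpq : p < q) (hpm : p ≤ m) (hx : x = f (2 * p) + 1) : x ∈ F := by
  rw [hx, ← h (2 * p) (Nat.zero_le _) (by omega) (by omega)]
  exact hf.apply_mem (by omega)

lemma IsLowerExtension.unique (hf : Enumerates f (2 * m + 2) F) (hx : IsLowerExtension f m x)
    (hy : IsLowerExtension f m y) (hxF : x ∉ F) (hyF : y ∉ F) : x = y := by
  obtain ⟨p, hp, hxp⟩ := hx
  obtain ⟨q, hq, hyq⟩ := hy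
  rcases lt_trichotomy p q with hpq | rfl | hpq
  · exact absurd (hp.mem_of_add_one_eq hf hpq hq.le hyq) hyF
  · omega
  · exact absurd (hq.mem_of_add_one_eq hf hpq hp.le hxp) hxF

lemma IsUpperExtension.unique (hf : Enumerates f (2 * m + 2) F) (hx : IsUpperExtension f m x)
    (hy : IsUpperExtension f m y) (hxF : x ∉ F) (hyF : y ∉ F) : x = y := by
  rcases hx with ⟨p, hp, hxp⟩ | ⟨hm, hxp⟩ <;> rcases hy with ⟨q, hq, hyq⟩ | ⟨hm', hyq⟩
  · rcases lt_trichotomy p q with hpq | rfl | hpq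
    · exact absurd (hq.pairedOn_left.mem_of_eq_add_one hf hpq hp.le hxp) hxF
    · omega
    · exact absurd (hp.pairedOn_left.mem_of_eq_add_one hf hpq hq.le hyq) hyF
  · exact absurd ((isPivot_self_iff.mp hm').mem_of_eq_add_one (q := m + 1) hf
      (Nat.lt_succ_of_le hp.le) hp.le hxp) hxF
  · exact absurd ((isPivot_self_iff.mp hm).mem_of_eq_add_one (q := m + 1) hf
      (Nat.lt_succ_of_le hq.le) hq.le hyq) hyF
  · omega

lemma IsLowerExtension.lt (hf : Enumerates f (2 * m + 2) F) (hx : IsLowerExtension f m x)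
    (hy : IsUpperExtension f m y) (hyF : y ∉ F) : x < y := by
  obtain ⟨p, hp, hxp⟩ := hx
  have hpm := hp.le
  rcases hy with ⟨q, hq, hyq⟩ | ⟨-, hyq⟩
  · rcases lt_or_ge q p with hqp | hpq
    · exact absurd (hp.pairedOn_left.mem_of_eq_add_one hf hqp hq.le hyq) hyF
    · have hqm := hq.le
      have hfpq : f (2 * p) ≤ f (2 * q) := hf.le (by omega) (by omega)
      omega
  · have hfp : f (2 * p) ≤ f (2 * m + 1) := hf.le (by omega) (by omega)
    omega

lemma IsPivot.of_add_one (hq : IsPivot f m (q + 1)) (hpair : f (2 * q + 2) = f (2 * q + 1) + 1) :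
    IsPivot f m q where
  le := Nat.le_of_succ_le hq.le
  pairedOn_left := hq.pairedOn_left.mono le_rfl (by omega) rfl
  pairedOn_right := by
    have hqm := hq.le
    rw [pairedOn_iff_of_le (b := 2 * q + 3) (by omega) (by omega) (by omega),
      pairedOn_add_two_iff le_rfl rfl]
    exact ⟨⟨fun i hi hi' => absurd hi' hi.not_gt, hpair⟩, hq.pairedOn_right⟩
  last_eq := hq.last_eq

lemma IsPivot.add_one (hq : IsPivot f m q) (hqm : q < m) (hpair : f (2 * q + 1) = f (2 * q) + 1) :
    IsPivot f m (q + 1) where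
  le := hqm
  pairedOn_left := (pairedOn_add_two_iff (b := 2 * q) (Nat.zero_le _) (by omega)).mpr
    ⟨hq.pairedOn_left, hpair⟩
  pairedOn_right := hq.pairedOn_right.mono (by omega) le_rfl (by omega)
  last_eq := hq.last_eq

lemma IsPivot.exists_isLowerExtension_or (hq : IsPivot f m q) (hf : Enumerates f (2 * m + 2) F)
    (hpos : 1 ≤ f 0) :
    (∃ x, 1 ≤ x ∧ x ∉ F ∧ IsLowerExtension f m x) ∨ IsPivot f m 0 ∧ f 0 = 1 := by
  induction q with
  | zero =>
    rcases hpos.eq_or_lt with h | h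
    · exact .inr ⟨hq, h.symm⟩
    · have hpred : f 0 - 1 + 1 = f 0 := Nat.sub_add_cancel hpos
      exact .inl ⟨f 0 - 1, by omega, hf.notMem_of_lt_first (by omega), 0, hq, hpred⟩
  | succ q ih =>
    have hqm := hq.le
    have hlt : f (2 * q + 1) < f (2 * q + 2) := hf.lt (by omega) (by omega)
    obtain hpair | hgap :
        f (2 * q + 2) = f (2 * q + 1) + 1 ∨ f (2 * q + 1) + 1 < f (2 * q + 2) := by omega
    · exact ih (hq.of_add_one hpair)
    · exact .inl ⟨f (2 * q + 2) - 1, by omega,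
        hf.notMem_of_lt_of_lt (i := 2 * q + 1) (by omega) (by omega) (Nat.sub_one_lt (by omega)),
        q + 1, hq, Nat.sub_add_cancel (by omega)⟩

lemma IsPivot.exists_isUpperExtension_or (hq : IsPivot f m q) (hf : Enumerates f (2 * m + 2) F)
    (hle : f (2 * m + 1) ≤ n) :
    (∃ x ≤ n, x ∉ F ∧ IsUpperExtension f m x) ∨ IsPivot f m m ∧ f (2 * m + 1) = n := by
  induction hd : m - q generalizing q with
  | zero =>
    obtain rfl : q = m := hq.le.antisymm (Nat.sub_eq_zero_iff_le.mp hd)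
    rcases hle.eq_or_lt with h | h
    · exact .inr ⟨hq, h⟩
    · exact .inl ⟨f (2 * q + 1) + 1, h, hf.notMem_of_last_lt (Nat.lt_succ_self _), .inr ⟨hq, rfl⟩⟩
  | succ d ih =>
    have hlt : f (2 * q) < f (2 * q + 1) := hf.lt (by omega) (by omega)
    have hlast : f (2 * q + 1) ≤ f (2 * m + 1) := hf.le (by omega) (by omega)
    obtain hpair | hgap : f (2 * q + 1) = f (2 * q) + 1 ∨ f (2 * q) + 1 < f (2 * q + 1) := by
      omega
    · exact ih (hq.add_one (by omega) hpair) (by omega)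
    · exact .inl ⟨f (2 * q) + 1, by omega,
        hf.notMem_of_lt_of_lt (i := 2 * q) (by omega) (by omega) hgap, .inl ⟨q, hq, rfl⟩⟩

lemma IsLowerExtension.eq_zero (hx : IsLowerExtension f m x) (hf : Enumerates f (2 * m + 2) F)
    (hxF : x ∉ F) (hfirst : IsPivot f m 0) (h : f 0 = 1) : x = 0 := by
  obtain ⟨q, hq, hxq⟩ := hx
  rcases q.eq_zero_or_pos with rfl | hpos
  · exact Nat.add_right_cancel (hxq.trans h)
  · exact absurd (hfirst.mem_of_add_one_eq hf hpos hq.le hxq) hxF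

lemma IsUpperExtension.eq_last_add_one (hx : IsUpperExtension f m x)
    (hf : Enumerates f (2 * m + 2) F) (hxF : x ∉ F) (hlast : IsPivot f m m) :
    x = f (2 * m + 1) + 1 := by
  obtain ⟨q, hq, hxq⟩ | ⟨-, hx⟩ := hx
  · exact absurd ((isPivot_self_iff.mp hlast).mem_of_eq_add_one (q := m + 1) hf
      (Nat.lt_succ_of_le hq.le) hq.le hxq) hxF
  · exact hx

lemma IsPivot.last_eq_first_add (hfirst : IsPivot f m 0) (hlast : IsPivot f m m) :
    f (2 * m + 1) = f 0 + (2 * m + 1) := by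
  have hstep : ∀ i ≤ 2 * m + 1, f i = f 0 + i := by
    intro i hi
    induction i with
    | zero => rfl
    | succ i ih =>
      rw [← add_assoc, ← ih (by omega)]
      rcases Nat.mod_two_eq_zero_or_one i with hi' | hi'
      · exact isPivot_self_iff.mp hlast i i.zero_le (by omega) hi'
      · exact hfirst.pairedOn_right i (by omega) (by omega) hi'
  exact hstep _ le_rfl

lemma IsLowerExtension.le_last (hx : IsLowerExtension f m x) (hf : Enumerates f (2 * m + 2) F) :
    x ≤ f (2 * m + 1) := by
  obtain ⟨q, hq, hxq⟩ := hx
  have hqm := hq.le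
  exact (Nat.le_succ x).trans (hxq.trans_le (hf.le (by omega) (by omega)))

lemma IsUpperExtension.pos (hx : IsUpperExtension f m x) : 1 ≤ x := by
  rcases hx with ⟨q, -, rfl⟩ | ⟨-, rfl⟩ <;> exact Nat.succ_pos _

lemma IsPivot.not_hasFinalGap (hq : IsPivot f m q) : ¬ HasFinalGap f m := by
  rintro ⟨-, hgap⟩
  have hlast := hq.last_eq
  omega

lemma HasFinalGap.existsUnique_isExtension (hgap : HasFinalGap f m)
    (hf : Enumerates f (2 * m + 2) F) (hF : F ⊆ Finset.Icc 1 n) : ∃! x, IsExtension m n F x := by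
  have hmid : f (2 * m) + 1 ∉ F :=
    hf.notMem_of_lt_of_lt (i := 2 * m) (by omega) (by omega) (by rw [hgap.2]; omega)
  have hle := (Finset.mem_Icc.mp (hF (hf.apply_mem (i := 2 * m + 1) (by omega)))).2
  refine ⟨f (2 * m) + 1, (isExtension_iff hf hF).mpr ⟨hmid, ?_, .inr (.inr ⟨hgap, rfl⟩)⟩, ?_⟩
  · exact Finset.mem_Icc.mpr ⟨Nat.succ_pos _, (Nat.le_succ _).trans (hgap.2.symm.trans_le hle)⟩
  · rintro y hy
    obtain ⟨-, -, ⟨q, hq, -⟩ | (⟨q, hq, -⟩ | ⟨hq, -⟩) | ⟨-, hy⟩⟩ := (isExtension_iff hf hF).mp hy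
    exacts [absurd hgap hq.not_hasFinalGap, absurd hgap hq.not_hasFinalGap,
      absurd hgap hq.not_hasFinalGap, hy]

lemma IsPivot.existsUnique_isExtension_of_last_eq (hlast : IsPivot f m m) (hn : f (2 * m + 1) = n)
    (hf : Enumerates f (2 * m + 2) F) (hF : F ⊆ Finset.Icc 1 n) (hcard : 2 * m + 3 ≤ n) :
    ∃! x, IsExtension m n F x := by
  have hpos := (Finset.mem_Icc.mp (hF (hf.apply_mem (i := 0) (by omega)))).1
  obtain ⟨x, hx, hxF, hlower⟩ | ⟨hfirst, h⟩ := hlast.exists_isLowerExtension_or hf hpos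
  · refine ⟨x, (isExtension_iff hf hF).mpr
      ⟨hxF, Finset.mem_Icc.mpr ⟨hx, hn ▸ hlower.le_last hf⟩, .inl hlower⟩, fun y hy => ?_⟩
    obtain ⟨hyF, hy, hy' | hy' | ⟨hgap, -⟩⟩ := (isExtension_iff hf hF).mp hy
    · exact hy'.unique hf hlower hyF hxF
    · have hy_last := hy'.eq_last_add_one hf hyF hlast
      have hyn := (Finset.mem_Icc.mp hy).2
      omega
    · exact absurd hgap hlast.not_hasFinalGap
  · have hspan := hfirst.last_eq_first_add hlast
    omega

lemma IsPivot.existsUnique_isExtension_of_first_eq (hfirst : IsPivot f m 0) (h : f 0 = 1)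
    (hf : Enumerates f (2 * m + 2) F) (hF : F ⊆ Finset.Icc 1 n) (hcard : 2 * m + 3 ≤ n) :
    ∃! x, IsExtension m n F x := by
  have hle := (Finset.mem_Icc.mp (hF (hf.apply_mem (i := 2 * m + 1) (by omega)))).2
  obtain ⟨x, hx, hxF, hupper⟩ | ⟨hlast, hn⟩ := hfirst.exists_isUpperExtension_or hf hle
  · refine ⟨x, (isExtension_iff hf hF).mpr
      ⟨hxF, Finset.mem_Icc.mpr ⟨hupper.pos, hx⟩, .inr (.inl hupper)⟩, fun y hy => ?_⟩
    obtain ⟨hyF, hy, hy' | hy' | ⟨hgap, -⟩⟩ := (isExtension_iff hf hF).mp hy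
    · have hy_zero := hy'.eq_zero hf hyF hfirst h
      have hy_pos := (Finset.mem_Icc.mp hy).1
      omega
    · exact hy'.unique hf hupper hyF hxF
    · exact absurd hgap hfirst.not_hasFinalGap
  · have hspan := hfirst.last_eq_first_add hlast
    omega

lemma existsUnique_isExtension_iff (hf : Enumerates f (2 * m + 2) F) (hF : F ⊆ Finset.Icc 1 n)
    (hcard : 2 * m + 3 ≤ n) :
    (∃! x, IsExtension m n F x) ↔ HasFinalGap f m ∨
      (IsPivot f m m ∧ f (2 * m + 1) = n) ∨ (IsPivot f m 0 ∧ f 0 = 1) := by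
  refine ⟨fun hunique => ?_, ?_⟩
  · obtain ⟨x, hx, -⟩ := id hunique
    have hpos := (Finset.mem_Icc.mp (hF (hf.apply_mem (i := 0) (by omega)))).1
    have hle := (Finset.mem_Icc.mp (hF (hf.apply_mem (i := 2 * m + 1) (by omega)))).2
    have hpivot : (∃ q, IsPivot f m q) ∨ HasFinalGap f m := by
      obtain ⟨-, -, ⟨q, hq, -⟩ | (⟨q, hq, -⟩ | ⟨hq, -⟩) | ⟨hgap, -⟩⟩ :=
        (isExtension_iff hf hF).mp hx
      exacts [.inl ⟨q, hq⟩, .inl ⟨q, hq⟩, .inl ⟨m, hq⟩, .inr hgap]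
    obtain ⟨q, hq⟩ | hgap := hpivot
    · obtain ⟨y, hy, hyF, hlower⟩ | hfirst := hq.exists_isLowerExtension_or hf hpos
      · obtain ⟨z, hz, hzF, hupper⟩ | hlast := hq.exists_isUpperExtension_or hf hle
        · have hy' : IsExtension m n F y := (isExtension_iff hf hF).mpr
            ⟨hyF, Finset.mem_Icc.mpr ⟨hy, (hlower.le_last hf).trans hle⟩, .inl hlower⟩
          have hz' : IsExtension m n F z := (isExtension_iff hf hF).mpr
            ⟨hzF, Finset.mem_Icc.mpr ⟨hupper.pos, hz⟩, .inr (.inl hupper)⟩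
          exact absurd (hunique.unique hy' hz') (hlower.lt hf hupper hzF).ne
        · exact .inr (.inl hlast)
      · exact .inr (.inr hfirst)
    · exact .inl hgap
  · rintro (hgap | ⟨hlast, hn⟩ | ⟨hfirst, h⟩)
    exacts [hgap.existsUnique_isExtension hf hF,
      hlast.existsUnique_isExtension_of_last_eq hn hf hF hcard,
      hfirst.existsUnique_isExtension_of_first_eq h hf hF hcard]

end Extension

/-! ### The three forms -/

section Form

variable {f : ℕ → ℕ} {F : Finset ℕ} {m n : ℕ}

lemma exists_bFacet_union_pair_iff {u v : ℕ} (hf : Enumerates f (2 * m + 2) F)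
    (hF : F ⊆ Finset.Icc 1 n) (huv : u < v) :
    (∃ τ, BFacet 1 (u - 1) m τ ∧ F = τ ∪ {u, v}) ↔
      PairedOn f 0 (2 * m) ∧ f (2 * m) = u ∧ f (2 * m + 1) = v := by
  have hinit := hf.of_le (Nat.le_add_right (2 * m) 2)
  simp only [bFacet_pred_iff_isIntervalUnion]
  rw [hf.exists_eq_union_pair_iff huv fun T hT t => hT.lt_of_mem, isIntervalUnion_twos_iff hinit,
    and_assoc]
  refine and_congr_right fun _ => and_iff_right_of_imp ?_
  rintro ⟨rfl, -⟩
  exact hinit.subset_Ico_iff.mpr fun i hi =>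
    ⟨(Finset.mem_Icc.mp (hF (hf.apply_mem (by omega)))).1, hf.lt hi (by omega)⟩

lemma hasFinalGap_iff (hf : Enumerates f (2 * m + 2) F) (hF : F ⊆ Finset.Icc 1 n) :
    HasFinalGap f m ↔
      ∃ i, i + 2 ≤ n ∧ ∃ τ, BFacet 1 (i - 1) m τ ∧ F = τ ∪ {i, i + 2} := by
  simp only [exists_bFacet_union_pair_iff hf hF (Nat.lt_add_of_pos_right two_pos)]
  constructor
  · rintro ⟨hpairs, hgap⟩
    have hlast := (Finset.mem_Icc.mp (hF (hf.apply_mem (i := 2 * m + 1) (by omega)))).2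
    exact ⟨_, hgap ▸ hlast, hpairs, rfl, hgap⟩
  · rintro ⟨_, -, hpairs, rfl, hgap⟩
    exact ⟨hpairs, hgap⟩

lemma isPivot_self_and_last_eq_iff (hf : Enumerates f (2 * m + 2) F) (hF : F ⊆ Finset.Icc 1 n) :
    IsPivot f m m ∧ f (2 * m + 1) = n ↔
      ∃ τ, BFacet 1 (n - 2) m τ ∧ F = τ ∪ {n - 1, n} := by
  have hpos := Finset.mem_Icc.mp (hF (hf.apply_mem (i := 0) (by omega)))
  rw [show n - 2 = n - 1 - 1 by omega, exists_bFacet_union_pair_iff hf hF (by omega),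
    isPivot_self_iff, pairedOn_add_two_iff (Nat.zero_le _) (by omega), and_assoc]
  refine and_congr_right fun _ => ?_
  omega

lemma exists_bFacet_union_one_triple_iff :
    (∃ i, 2 ≤ i ∧ i ≤ n - 2 ∧ ∃ τ, BFacet 2 (i - 1) m τ ∧ F = τ ∪ {1, i, i + 1, i + 2}) ↔
      ∃ T, IsIntervalUnion 2 (n + 1) (m + 1) (twosThree m) T ∧ F = insert 1 T := by
  have hunion (T : Finset ℕ) (i : ℕ) :
      T ∪ {1, i, i + 1, i + 2} = insert 1 (T ∪ Finset.Ico i (i + 3)) := by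
    ext
    grind
  simp only [bFacet_pred_iff_isIntervalUnion, isIntervalUnion_succ_iff, twosThree_comp_castSucc,
    twosThree_last, hunion]
  constructor
  · rintro ⟨i, hi, hin, τ, hτ, hF⟩
    exact ⟨_, ⟨i, τ, hi, by omega, hτ, rfl⟩, hF⟩
  · rintro ⟨_, ⟨i, τ, hi, hin, hτ, rfl⟩, hF⟩
    exact ⟨i, hi, by omega, τ, hτ, hF⟩

lemma isPivot_zero_and_first_eq_iff (hf : Enumerates f (2 * m + 4) F) (hF : F ⊆ Finset.Icc 1 n) :
    IsPivot f (m + 1) 0 ∧ f 0 = 1 ↔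
      ∃ i, 2 ≤ i ∧ i ≤ n - 2 ∧ ∃ τ, BFacet 2 (i - 1) m τ ∧ F = τ ∪ {1, i, i + 1, i + 2} := by
  have hpivot : IsPivot f (m + 1) 0 ↔ IsTwosThree (fun i => f (i + 1)) m := by
    rw [IsTwosThree, pairedOn_comp_add_one_iff]
    exact ⟨fun h => ⟨h.pairedOn_right, h.last_eq⟩,
      fun h => ⟨Nat.zero_le _, by simp [PairedOn], h.1, h.2⟩⟩
  have htail (h : f 0 = 1) :
      ((Finset.range (2 * m + 3)).image fun i => f (i + 1)) ⊆ Finset.Ico 2 (n + 1) :=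
    hf.tail.subset_Ico_iff.mpr fun i hi =>
      ⟨h.symm.trans_lt (hf.lt i.succ_pos (by omega)),
        Nat.lt_succ_of_le (Finset.mem_Icc.mp (hF (hf.apply_mem (by omega)))).2⟩
  rw [exists_bFacet_union_one_triple_iff, hf.exists_eq_insert_iff_of_forall_gt fun T hT t ht =>
    (Finset.mem_Ico.mp (hT.subset_Ico ht)).1, isIntervalUnion_twosThree_iff hf.tail, hpivot]
  exact ⟨fun ⟨htwos, h⟩ => ⟨h, htwos, htail h⟩, fun ⟨h, htwos, _⟩ => ⟨htwos, h⟩⟩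

end Form

theorem stmt_11 (k n : ℕ) (hk : 2 ≤ k) (hn : 2 * k + 1 ≤ n)
    (F : Finset ℕ) (hF : F ⊆ Finset.Icc 1 n) (hcard : F.card = 2 * k) :
    (∃! G : Finset ℕ,
        GammaFacet n k (fun t => if t.val = k - 1 then 3 else 2) G ∧ F ⊆ G) ↔
      ((∃ i : ℕ, i + 2 ≤ n ∧
          ∃ τ : Finset ℕ, BFacet 1 (i - 1) (k - 1) τ ∧ F = τ ∪ {i, i + 2}) ∨
       (∃ τ : Finset ℕ, BFacet 1 (n - 2) (k - 1) τ ∧ F = τ ∪ {n - 1, n}) ∨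
       (∃ i : ℕ, 2 ≤ i ∧ i ≤ n - 2 ∧
          ∃ τ : Finset ℕ, BFacet 2 (i - 1) (k - 2) τ ∧
            F = τ ∪ {1, i, i + 1, i + 2})) := by
  obtain ⟨m, rfl⟩ := Nat.exists_eq_add_of_le' hk
  obtain ⟨f, hf⟩ := exists_enumerates F
  rw [hcard] at hf
  have hcard_facet (G : Finset ℕ) (hG : GammaFacet n (m + 2) (twosThree (m + 1)) G) :
      G.card = F.card + 1 := by
    rw [(gammaFacet_iff_isIntervalUnion.mp hG).card_eq, sum_twosThree, hcard]
    ring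
  refine (existsUnique_superset_iff_existsUnique_insert hcard_facet).trans ?_
  refine (existsUnique_isExtension_iff (m := m + 1) hf hF hn).trans ?_
  exact or_congr (hasFinalGap_iff hf hF)
    (or_congr (isPivot_self_and_last_eq_iff hf hF) (isPivot_zero_and_first_eq_iff hf hF))
end

section
/- Let k ≥ 2 and n ≥ 2k+2, and let J = (2, …, 2, 4) have k−1 entries equal to 2 followed by one entry 4 (entries summing to 2k+2). Then a (2k+1)-element subset F of [n] is contained in exactly one facet of Γ^J_n (i.e., F is a facet of D(n,2k)) if and only if F has one of the following forms: (1) F = τ ∪ {i, i+1, i+3} for some i with i+3 ≤ n and some facet τ of B([1, i−1], 2k−3); (2) F = τ ∪ {i, i+2, i+3} for some i with i+3 ≤ n and some facet τ of B([1, i−1], 2k−3); (3) F = τ ∪ {n−2, n−1, n} for some facet τ of B([1, n−3], 2k−3); (4) F = τ ∪ {1, i, i+1, i+2, i+3} for some i with 2 ≤ i ≤ n−3 and some facet τ of B([2, i−1], 2k−5). -/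
/-!
A facet of `Γ^J_n` has one element more than `F`, so the facets containing `F` correspond to the
vertices `v` such that `F ∪ {v}` is a facet. Uniqueness of `v` is decided by induction on the number
of pairs, over vertex sets `[a + 1, n]` for all `a`. Let `f = min F`.

* If `f + 1 ∉ F`, then `v` has to be `f - 1` or `f + 1`, and either both complete `F` or neither
  does, except that `f - 1` is not available when `f = a + 1`.
* If `F = {f, f + 1} ∪ L` and `f = a + 1`, then the completions of `F` are those of `L` over
  `[f + 2, n]`.
* If `F = {f, f + 1} ∪ L` and `f > a + 1`, then exchanging `f - 1` with `f + 1` turns the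
  completions of `F` into those of `L` over `[f + 1, n]`.

The boundary at the left end is described by a virtual vertex `a`: the exceptional sets `F` are
those for which `F ∪ {a}` is a facet over `[a, n]`. For `a = 0` these are the sets of type (4), in
which the element `1` is paired with the virtual vertex `0`.
-/

open Finset

lemma existsUnique_superset_iff_existsUnique_insert_s12 {α : Type*} [DecidableEq α]
    {p : Finset α → Prop} {s : Finset α} (hp : ∀ t, p t → #t = #s + 1) :
    (∃! t, p t ∧ s ⊆ t) ↔ ∃! v, p (insert v s) := by
  have eq_insert {t : Finset α} (ht : p t) (hst : s ⊆ t) : ∃ v, insert v s = t := by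
    obtain ⟨v, -, rfl⟩ := exists_eq_insert_iff.2 ⟨hst, (hp t ht).symm⟩
    exact ⟨v, rfl⟩
  constructor
  · rintro ⟨t, ⟨ht, hst⟩, unique⟩
    obtain ⟨v, rfl⟩ := eq_insert ht hst
    refine ⟨v, ht, fun w hw => (insert_inj fun hws => ?_).1 (unique _ ⟨hw, subset_insert w s⟩)⟩
    have := hp _ hw
    simp [insert_eq_self.2 hws] at this
  · rintro ⟨v, hv, unique⟩
    refine ⟨insert v s, ⟨hv, subset_insert v s⟩, ?_⟩
    rintro t ⟨ht, hst⟩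
    obtain ⟨w, rfl⟩ := eq_insert ht hst
    rw [unique w ht]

lemma add_card_le_of_subset_Icc {F : Finset ℕ} {a n : ℕ} (hF : F ⊆ Icc a n) (hne : F.Nonempty) :
    a + #F ≤ n + 1 := by
  obtain ⟨x, hx⟩ := hne
  have := card_le_card hF
  have := mem_Icc.1 (hF hx)
  rw [Nat.card_Icc] at *
  omega

lemma insert_eq_insert_iff_of_forall_lt {β : Type*} [LinearOrder β] {a b : β} {s t : Finset β}
    (ha : ∀ x ∈ s, a < x) (hb : ∀ x ∈ t, b < x) : insert a s = insert b t ↔ a = b ∧ s = t := by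
  refine ⟨fun h => ?_, fun ⟨hab, hst⟩ => hab ▸ hst ▸ rfl⟩
  obtain rfl : a = b := by
    have hat : a ∈ insert b t := h ▸ mem_insert_self a s
    have hbs : b ∈ insert a s := h ▸ mem_insert_self b t
    grind
  exact ⟨rfl, by rw [← erase_insert fun h => (ha a h).false, h,
    erase_insert fun h => (hb a h).false]⟩

lemma exists_forall_lt_eq_insert {β : Type*} [LinearOrder β] {s : Finset β} (hs : s.Nonempty) :
    ∃ a t, (∀ x ∈ t, a < x) ∧ #s = #t + 1 ∧ s = insert a t :=
  ⟨s.min' hs, s.erase (s.min' hs), fun _ hx => s.min'_lt_of_mem_erase_min' hs hx,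
    (card_erase_add_one (s.min'_mem hs)).symm, (insert_erase (s.min'_mem hs)).symm⟩

lemma exists_eq_triple_of_card_eq_three {β : Type*} [LinearOrder β] {s : Finset β} (hs : #s = 3) :
    ∃ x y z, x < y ∧ y < z ∧ s = {x, y, z} := by
  obtain ⟨x, t, hxt, ht, rfl⟩ := exists_forall_lt_eq_insert (card_pos.1 (by omega : 0 < #s))
  obtain ⟨y, u, hyu, hu, rfl⟩ := exists_forall_lt_eq_insert (card_pos.1 (by omega : 0 < #t))
  obtain ⟨z, rfl⟩ := card_eq_one.1 (by omega : #u = 1)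
  exact ⟨x, y, z, hxt y (by simp), hyu z (by simp), rfl⟩

lemma triple_eq_triple_iff {β : Type*} [LinearOrder β] {x y z x' y' z' : β} (hxy : x < y)
    (hyz : y < z) (hxy' : x' < y') (hyz' : y' < z') :
    ({x, y, z} : Finset β) = {x', y', z'} ↔ x = x' ∧ y = y' ∧ z = z' := by
  rw [insert_eq_insert_iff_of_forall_lt (by grind) (by grind),
    insert_eq_insert_iff_of_forall_lt (by simpa) (by simpa), singleton_inj]

lemma bFacet_zero {a b : ℕ} {S : Finset ℕ} : BFacet a b 0 S ↔ S = ∅ := by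
  simp [BFacet]

lemma bFacet_succ {a b m : ℕ} {S : Finset ℕ} : BFacet a b (m + 1) S ↔
    ∃ i T, a ≤ i ∧ i + 1 ≤ b ∧ BFacet (i + 2) b m T ∧ S = insert i (insert (i + 1) T) := by
  constructor
  · rintro ⟨i, bounds, separated, rfl⟩
    refine ⟨i 0, _, (bounds 0).1, (bounds 0).2, ⟨fun j => i j.succ, fun j => ?_,
      fun j j' h => separated _ _ (Fin.succ_lt_succ_iff.2 h), rfl⟩, ?_⟩
    · exact ⟨separated 0 j.succ j.succ_pos, (bounds _).2⟩
    · ext x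
      simp [Fin.exists_fin_succ, or_assoc]
  · rintro ⟨i, T, hai, hib, ⟨u, bounds, separated, rfl⟩, rfl⟩
    refine ⟨Fin.cons i u, Fin.forall_fin_succ.2 ⟨⟨hai, hib⟩, fun j => ?_⟩,
      Fin.forall_fin_succ.2 ⟨Fin.forall_fin_succ.2 ⟨by simp, fun j _ => (bounds j).1⟩,
        fun j => Fin.forall_fin_succ.2 ⟨by simp, fun j' h => ?_⟩⟩, ?_⟩
    · exact ⟨(Nat.le_add_right_of_le hai).trans (bounds j).1, (bounds j).2⟩
    · exact separated j j' (Fin.succ_lt_succ_iff.1 h)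
    · ext x
      simp [Fin.exists_fin_succ, or_assoc]

/-- `S` consists of `m` disjoint pairs of consecutive integers that are at least `a`, followed by a
nonempty set `t ∈ 𝒯` all of whose elements are larger. The pairs are encoded as a facet of
`B([a, min t - 1], 2m - 1)`. -/
def PairsThen (𝒯 : Set (Finset ℕ)) (m a : ℕ) (S : Finset ℕ) : Prop :=
  ∃ s t τ, t ∈ 𝒯 ∧ IsLeast (t : Set ℕ) s ∧ a ≤ s ∧ BFacet a (s - 1) m τ ∧ S = τ ∪ t

namespace PairsThen

variable {𝒯 𝒰 : Set (Finset ℕ)} {m a b c i : ℕ} {S T : Finset ℕ}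

lemma zero_iff : PairsThen 𝒯 0 a S ↔ ∃ s, S ∈ 𝒯 ∧ IsLeast (S : Set ℕ) s ∧ a ≤ s := by
  simp [PairsThen, bFacet_zero]

lemma succ_iff : PairsThen 𝒯 (m + 1) a S ↔
    ∃ i T, a ≤ i ∧ PairsThen 𝒯 m (i + 2) T ∧ S = insert i (insert (i + 1) T) := by
  simp only [PairsThen, bFacet_succ]
  constructor
  · rintro ⟨s, t, _, ht, hs, -, ⟨i, τ, hai, his, hτ, rfl⟩, rfl⟩
    exact ⟨i, τ ∪ t, hai, ⟨s, t, τ, ht, hs, by omega, hτ, rfl⟩, by simp only [insert_union]⟩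
  · rintro ⟨i, _, hai, ⟨s, t, τ, ht, hs, his, hτ, rfl⟩, rfl⟩
    exact ⟨s, t, _, ht, hs, by omega, ⟨i, τ, hai, by omega, hτ, rfl⟩, by simp only [insert_union]⟩

lemma union_iff : PairsThen (𝒯 ∪ 𝒰) m a S ↔ PairsThen 𝒯 m a S ∨ PairsThen 𝒰 m a S := by
  simp only [PairsThen, Set.mem_union, or_and_right, exists_or]

lemma le_of_mem {x : ℕ} (h : PairsThen 𝒯 m a S) (hx : x ∈ S) : a ≤ x := by
  induction m generalizing a S with
  | zero =>
    obtain ⟨s, -, hs, has⟩ := zero_iff.1 h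
    exact has.trans (hs.2 hx)
  | succ m ih =>
    obtain ⟨i, T, hai, hT, rfl⟩ := succ_iff.1 h
    simp only [mem_insert] at hx
    rcases hx with rfl | rfl | hx
    · exact hai
    · omega
    · have := ih hT hx
      omega

lemma card_eq (h𝒯 : ∀ t ∈ 𝒯, #t = c) (h : PairsThen 𝒯 m a S) : #S = 2 * m + c := by
  induction m generalizing a S with
  | zero =>
    obtain ⟨s, hS, -⟩ := zero_iff.1 h
    simpa using h𝒯 S hS
  | succ m ih =>
    obtain ⟨i, T, -, hT, rfl⟩ := succ_iff.1 h
    have hiT : ∀ x ∈ T, i + 2 ≤ x := fun x => hT.le_of_mem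
    rw [card_insert_of_notMem (by grind), card_insert_of_notMem (by grind), ih hT]
    ring

lemma mono_left (hba : b ≤ a) (h : PairsThen 𝒯 m a S) : PairsThen 𝒯 m b S := by
  cases m with
  | zero =>
    obtain ⟨s, hS, hs, has⟩ := zero_iff.1 h
    exact zero_iff.2 ⟨s, hS, hs, hba.trans has⟩
  | succ m =>
    obtain ⟨i, T, hai, hT⟩ := succ_iff.1 h
    exact succ_iff.2 ⟨i, T, hba.trans hai, hT⟩

lemma of_forall_le (h : PairsThen 𝒯 m a S) (hb : ∀ x ∈ S, b ≤ x) : PairsThen 𝒯 m b S := by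
  cases m with
  | zero =>
    obtain ⟨s, hS, hs, -⟩ := zero_iff.1 h
    exact zero_iff.2 ⟨s, hS, hs, hb s hs.1⟩
  | succ m =>
    obtain ⟨i, T, -, hT, rfl⟩ := succ_iff.1 h
    exact succ_iff.2 ⟨i, T, hb i (mem_insert_self i _), hT, rfl⟩

lemma iff_of_forall_le (hab : a ≤ b) (hb : ∀ x ∈ S, b ≤ x) :
    PairsThen 𝒯 m a S ↔ PairsThen 𝒯 m b S :=
  ⟨fun h => h.of_forall_le hb, mono_left hab⟩

lemma succ_insert_iff (hi : ∀ x ∈ S, i < x) : PairsThen 𝒯 (m + 1) a (insert i S) ↔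
    a ≤ i ∧ ∃ T, PairsThen 𝒯 m (i + 2) T ∧ S = insert (i + 1) T := by
  rw [succ_iff]
  constructor
  · rintro ⟨j, T, haj, hT, hST⟩
    have hjT : ∀ x ∈ T, j + 2 ≤ x := fun x => hT.le_of_mem
    obtain ⟨rfl, rfl⟩ := (insert_eq_insert_iff_of_forall_lt hi (by grind)).1 hST
    exact ⟨haj, T, hT, rfl⟩
  · rintro ⟨hai, T, hT, rfl⟩
    exact ⟨i, T, hai, hT, rfl⟩

lemma succ_insert_insert_iff (hi : ∀ x ∈ T, i + 2 ≤ x) :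
    PairsThen 𝒯 (m + 1) a (insert i (insert (i + 1) T)) ↔
      a ≤ i ∧ PairsThen 𝒯 m (i + 2) T := by
  rw [succ_insert_iff (by grind), and_congr_right_iff]
  refine fun _ => ⟨?_, fun hT => ⟨T, hT, rfl⟩⟩
  rintro ⟨T', hT', hTT'⟩
  obtain ⟨-, rfl⟩ := (insert_eq_insert_iff_of_forall_lt (fun x hx => hi x hx)
    fun x hx => hT'.le_of_mem hx).1 hTT'
  exact hT'

lemma not_succ_insert_of_gap (hi : ∀ x ∈ S, i + 2 ≤ x) :
    ¬ PairsThen 𝒯 (m + 1) a (insert i S) := by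
  rw [succ_insert_iff fun x hx => by have := hi x hx; omega]
  rintro ⟨-, T, -, rfl⟩
  have := hi (i + 1) (mem_insert_self _ T)
  omega

lemma setOf_insert_iff {p : ℕ → Prop} {u : ℕ → Finset ℕ} (hu : ∀ s, ∀ x ∈ u s, s ≤ x) :
    PairsThen {t | ∃ s, p s ∧ t = insert s (u s)} m a S ↔
      ∃ s, a ≤ s ∧ p s ∧ ∃ τ, BFacet a (s - 1) m τ ∧ S = τ ∪ insert s (u s) := by
  have isLeast (s : ℕ) : IsLeast (insert s (u s) : Finset ℕ) s :=
    ⟨mem_coe.2 (mem_insert_self s _), fun x hx => by grind⟩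
  constructor
  · rintro ⟨s, _, τ, ⟨s', hp, rfl⟩, hs, has, hτ, rfl⟩
    obtain rfl := hs.unique (isLeast s')
    exact ⟨s, has, hp, τ, hτ, rfl⟩
  · rintro ⟨s, has, hp, τ, hτ, rfl⟩
    exact ⟨s, _, τ, ⟨s, hp, rfl⟩, isLeast s, has, hτ, rfl⟩

end PairsThen

/-- The possible last intervals of a facet of `Γ^(2,…,2,4)_n`. -/
def blockTails (n : ℕ) : Set (Finset ℕ) :=
  {t | ∃ s, s + 3 ≤ n ∧ t = {s, s + 1, s + 2, s + 3}}

/-- What may follow the pairs in a facet of `D(n, 2k)` of type (1), (2) or (3): a block of four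
consecutive integers without one of its two middle elements, or the last three elements of `[n]`. -/
def boundaryTails (n : ℕ) : Set (Finset ℕ) :=
  {t | ∃ s, s + 3 ≤ n ∧ t = {s, s + 1, s + 3}} ∪ {t | ∃ s, s + 3 ≤ n ∧ t = {s, s + 2, s + 3}} ∪
    {t | ∃ s, s + 2 = n ∧ t = {s, s + 1, s + 2}}

section Tails

variable {n m a : ℕ} {S : Finset ℕ}

lemma pairsThen_blockTails_iff : PairsThen (blockTails n) m a S ↔
    ∃ s, a ≤ s ∧ s + 3 ≤ n ∧ ∃ τ, BFacet a (s - 1) m τ ∧ S = τ ∪ {s, s + 1, s + 2, s + 3} :=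
  PairsThen.setOf_insert_iff (by simp)

lemma pairsThen_boundaryTails_iff : PairsThen (boundaryTails n) m a S ↔
    (∃ s, a ≤ s ∧ s + 3 ≤ n ∧ ∃ τ, BFacet a (s - 1) m τ ∧ S = τ ∪ {s, s + 1, s + 3}) ∨
    (∃ s, a ≤ s ∧ s + 3 ≤ n ∧ ∃ τ, BFacet a (s - 1) m τ ∧ S = τ ∪ {s, s + 2, s + 3}) ∨
    (∃ s, a ≤ s ∧ s + 2 = n ∧ ∃ τ, BFacet a (s - 1) m τ ∧ S = τ ∪ {s, s + 1, s + 2}) := by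
  rw [boundaryTails, PairsThen.union_iff, PairsThen.union_iff, or_assoc,
    PairsThen.setOf_insert_iff (by simp), PairsThen.setOf_insert_iff (by simp),
    PairsThen.setOf_insert_iff (by simp)]

lemma card_of_pairsThen_blockTails (h : PairsThen (blockTails n) m a S) : #S = 2 * m + 4 := by
  refine h.card_eq ?_
  rintro t ⟨s, -, rfl⟩
  simp

lemma not_pairsThen_blockTails_insert_of_gap {i : ℕ} (hi : ∀ x ∈ S, i + 2 ≤ x) :
    ¬ PairsThen (blockTails n) m a (insert i S) := by
  cases m with
  | succ m => exact PairsThen.not_succ_insert_of_gap hi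
  | zero =>
    intro h
    obtain ⟨_, ⟨s, -, heq⟩, -⟩ := PairsThen.zero_iff.1 h
    obtain ⟨rfl, rfl⟩ := (insert_eq_insert_iff_of_forall_lt (by grind) (by simp)).1 heq
    simp at hi

end Tails

section Ridges

variable {n m a f v : ℕ} {F L R : Finset ℕ}

lemma pairsThen_boundaryTails_zero_iff {x y z : ℕ} (hxy : x < y) (hyz : y < z) :
    PairsThen (boundaryTails n) 0 a {x, y, z} ↔
      (a ≤ x ∧ x + 3 ≤ n ∧ y = x + 1 ∧ z = x + 3) ∨
      (a ≤ x ∧ x + 3 ≤ n ∧ y = x + 2 ∧ z = x + 3) ∨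
      (a ≤ x ∧ x + 2 = n ∧ y = x + 1 ∧ z = x + 2) := by
  simp only [pairsThen_boundaryTails_iff, bFacet_zero, exists_eq_left, empty_union]
  simp +contextual only [triple_eq_triple_iff hxy hyz, lt_add_iff_pos_right, add_lt_add_iff_left,
    Nat.one_lt_ofNat, zero_lt_one, Nat.ofNat_pos, Nat.lt_add_one]
  refine or_congr ?_ (or_congr ?_ ?_) <;>
    exact ⟨by rintro ⟨s, h⟩; omega, fun h => ⟨x, by omega⟩⟩

lemma pairsThen_blockTails_zero_insert_iff {x y z : ℕ} (hax : a < x) (hxy : x < y) (hyz : y < z) :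
    PairsThen (blockTails n) 0 a (insert a {x, y, z}) ↔
      a + 3 ≤ n ∧ x = a + 1 ∧ y = a + 2 ∧ z = a + 3 := by
  simp only [pairsThen_blockTails_iff, bFacet_zero, exists_eq_left, empty_union]
  constructor
  · rintro ⟨s, -, hsn, heq⟩
    obtain ⟨rfl, htriple⟩ := (insert_eq_insert_iff_of_forall_lt (by grind) (by simp)).1 heq
    exact ⟨hsn, (triple_eq_triple_iff hxy hyz (by simp) (by simp)).1 htriple⟩
  · rintro ⟨han, rfl, rfl, rfl⟩
    exact ⟨a, le_rfl, han, rfl⟩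

lemma existsUnique_insert_triple_iff {x y z : ℕ} (hxy : x < y) (hyz : y < z) :
    (∃! v, PairsThen (blockTails n) 0 a (insert v {x, y, z})) ↔
      ∃! s, a ≤ s ∧ s + 3 ≤ n ∧ s ≤ x ∧ z ≤ s + 3 := by
  have subset_iff (s : ℕ) : {x, y, z} ⊆ ({s, s + 1, s + 2, s + 3} : Finset ℕ) ↔
      s ≤ x ∧ z ≤ s + 3 := by
    simp only [insert_subset_iff, singleton_subset_iff, mem_insert, mem_singleton]
    omega
  have block_injective {s s' : ℕ} (h : ({s, s + 1, s + 2, s + 3} : Finset ℕ) =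
      {s', s' + 1, s' + 2, s' + 3}) : s = s' :=
    ((insert_eq_insert_iff_of_forall_lt (by simp) (by simp)).1 h).1
  rw [← existsUnique_superset_iff_existsUnique_insert_s12 fun t ht => by
    rw [card_of_pairsThen_blockTails ht, card_eq_three.2 ⟨x, y, z, hxy.ne, (hxy.trans hyz).ne,
      hyz.ne, rfl⟩]]
  simp only [pairsThen_blockTails_iff, bFacet_zero, exists_eq_left, empty_union]
  constructor
  · rintro ⟨_, ⟨⟨s, has, hsn, rfl⟩, hs⟩, unique⟩
    exact ⟨s, ⟨has, hsn, (subset_iff s).1 hs⟩, fun s' ⟨has', hsn', hs'⟩ =>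
      block_injective (unique _ ⟨⟨s', has', hsn', rfl⟩, (subset_iff s').2 hs'⟩)⟩
  · rintro ⟨s, ⟨has, hsn, hs⟩, unique⟩
    refine ⟨_, ⟨⟨s, has, hsn, rfl⟩, (subset_iff s).2 hs⟩, ?_⟩
    rintro _ ⟨⟨s', has', hsn', rfl⟩, hs'⟩
    rw [unique s' ⟨has', hsn', (subset_iff s').1 hs'⟩]

lemma existsUnique_insert_iff_of_card_eq_three (hF : F ⊆ Icc (a + 1) n) (hcard : #F = 3)
    (hn : a + 4 ≤ n) :
    (∃! v, PairsThen (blockTails n) 0 (a + 1) (insert v F)) ↔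
      PairsThen (boundaryTails n) 0 (a + 1) F ∨ PairsThen (blockTails n) 0 a (insert a F) := by
  obtain ⟨x, y, z, hxy, hyz, rfl⟩ := exists_eq_triple_of_card_eq_three hcard
  have hax : a < x := (mem_Icc.1 (hF (by simp))).1
  have hzn : z ≤ n := (mem_Icc.1 (hF (by simp))).2
  rw [existsUnique_insert_triple_iff hxy hyz, pairsThen_boundaryTails_zero_iff hxy hyz,
    pairsThen_blockTails_zero_insert_iff hax hxy hyz]
  constructor
  · rintro ⟨s, hs, unique⟩
    have not_pred : ¬ (a + 1 ≤ s - 1 ∧ z ≤ s - 1 + 3) := fun h => by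
      have := unique (s - 1) (by omega)
      omega
    have not_succ : ¬ (s + 4 ≤ n ∧ s + 1 ≤ x) := fun h => by
      have := unique (s + 1) (by omega)
      omega
    omega
  · intro h
    rcases le_or_gt (x + 3) n with hxn | hxn
    · exact ⟨x, by omega, fun s hs => by omega⟩
    · exact ⟨x - 1, by omega, fun s hs => by omega⟩

lemma pairsThen_insert_insert_iff_of_gap (hR : ∀ x ∈ R, f + 2 ≤ x) (haf : a ≤ f) :
    PairsThen (blockTails n) (m + 1) a (insert v (insert f R)) ↔
      PairsThen (blockTails n) m (f + 2) R ∧ (v = f + 1 ∨ v + 1 = f ∧ a ≤ v) := by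
  by_cases hv : v = f + 1
  · subst hv
    rw [insert_comm, PairsThen.succ_insert_insert_iff hR]
    grind
  by_cases hv' : v + 1 = f
  · subst hv'
    rw [PairsThen.succ_insert_insert_iff (by grind),
      PairsThen.iff_of_forall_le (a := v + 2) (b := v + 1 + 2) (by omega) hR]
    grind
  simp only [hv, hv', false_and, or_false, and_false, iff_false]
  rcases lt_or_ge v f with hvf | hfv
  · exact PairsThen.not_succ_insert_of_gap (by grind)
  · rcases eq_or_lt_of_le hfv with rfl | hfv
    · rw [insert_idem]
      exact PairsThen.not_succ_insert_of_gap hR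
    · rw [insert_comm]
      exact PairsThen.not_succ_insert_of_gap (by grind)

lemma existsUnique_insert_iff_of_gap (hR : ∀ x ∈ R, f + 2 ≤ x) (haf : a < f) :
    (∃! v, PairsThen (blockTails n) (m + 1) (a + 1) (insert v (insert f R))) ↔
      PairsThen (blockTails n) (m + 1) a (insert a (insert f R)) := by
  simp only [pairsThen_insert_insert_iff_of_gap hR (Nat.succ_le_of_lt haf),
    pairsThen_insert_insert_iff_of_gap hR haf.le]
  constructor
  · rintro ⟨v, ⟨hRΓ, -⟩, unique⟩
    refine ⟨hRΓ, Or.inr ⟨?_, le_rfl⟩⟩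
    by_contra hne
    have h₁ := unique (f + 1) ⟨hRΓ, Or.inl rfl⟩
    have h₂ := unique (f - 1) ⟨hRΓ, by omega⟩
    omega
  · rintro ⟨hRΓ, h⟩
    exact ⟨f + 1, ⟨hRΓ, Or.inl rfl⟩, fun v hv => by omega⟩

lemma notMem_of_pairsThen_insert (hF : #F = 2 * m + 3)
    (h : PairsThen (blockTails n) m a (insert v F)) : v ∉ F := by
  intro hv
  have := card_of_pairsThen_blockTails h
  rw [insert_eq_of_mem hv] at this
  omega

lemma not_pairsThen_insert_pair_of_mem (hL : ∀ x ∈ L, f + 2 ≤ x) (hcard : #L = 2 * m + 3)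
    (hv : v = f ∨ v = f + 1) :
    ¬ PairsThen (blockTails n) (m + 1) a (insert v (insert f (insert (f + 1) L))) := by
  have hcard' : #(insert f (insert (f + 1) L)) = 2 * (m + 1) + 3 := by
    rw [card_insert_of_notMem (by grind), card_insert_of_notMem (by grind), hcard]
    ring
  exact fun h => notMem_of_pairsThen_insert hcard' h (by grind)

lemma pairsThen_insert_pair_iff (hL : ∀ x ∈ L, a + 2 ≤ x) (hcard : #L = 2 * m + 3) :
    PairsThen (blockTails n) (m + 1) a (insert v (insert a (insert (a + 1) L))) ↔
      PairsThen (blockTails n) m (a + 2) (insert v L) := by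
  rcases lt_or_ge v (a + 2) with hv | hv
  · refine iff_of_false (fun h => ?_) fun h => ?_
    · have := h.le_of_mem (mem_insert_self v _)
      exact not_pairsThen_insert_pair_of_mem hL hcard (by omega) h
    · have := h.le_of_mem (mem_insert_self v L)
      omega
  · rw [insert_comm v, insert_comm v, PairsThen.succ_insert_insert_iff (by grind)]
    exact and_iff_right le_rfl

-- Adding `f - 1` to `{f, f + 1} ∪ L` makes `{f - 1, f}` the first pair and leaves `{f + 1} ∪ L`;
-- a vertex other than `f - 1` and `f + 1` completes both `{f, f + 1} ∪ L` and `L` or neither.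
lemma pairsThen_insert_pair_iff_swap (hL : ∀ x ∈ L, f + 2 ≤ x) (hcard : #L = 2 * m + 3)
    (haf : a < f) :
    PairsThen (blockTails n) (m + 1) a (insert v (insert f (insert (f + 1) L))) ↔
      PairsThen (blockTails n) m (f + 1) (insert (Equiv.swap (f - 1) (f + 1) v) L) := by
  rcases eq_or_ne v (f - 1) with rfl | hv
  · obtain ⟨e, rfl⟩ : ∃ e, f = e + 1 := ⟨f - 1, by omega⟩
    rw [Equiv.swap_apply_left, Nat.add_sub_cancel, PairsThen.succ_insert_insert_iff (by grind)]
    exact and_iff_right (Nat.le_of_lt_succ haf)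
  rcases eq_or_ne v (f + 1) with rfl | hv'
  · rw [Equiv.swap_apply_right]
    refine iff_of_false (not_pairsThen_insert_pair_of_mem hL hcard (Or.inr rfl)) fun h => ?_
    have := h.le_of_mem (mem_insert_self _ L)
    omega
  rw [Equiv.swap_apply_of_ne_of_ne hv hv']
  rcases lt_or_ge v (f + 2) with hvf | hvf
  · refine iff_of_false ?_ fun h => ?_
    · rcases eq_or_ne v f with rfl | hvf'
      · exact not_pairsThen_insert_pair_of_mem hL hcard (Or.inl rfl)
      · exact PairsThen.not_succ_insert_of_gap (by grind)
    · have := h.le_of_mem (mem_insert_self v L)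
      omega
  · rw [insert_comm v, insert_comm v, PairsThen.succ_insert_insert_iff (by grind),
      PairsThen.iff_of_forall_le (a := f + 1) (b := f + 2) (by omega) (by grind)]
    exact and_iff_right haf.le

lemma existsUnique_insert_pair_iff (hL : ∀ x ∈ L, f + 2 ≤ x) (hcard : #L = 2 * m + 3)
    (haf : a < f) :
    (∃! v, PairsThen (blockTails n) (m + 1) a (insert v (insert f (insert (f + 1) L)))) ↔
      ∃! v, PairsThen (blockTails n) m (f + 1) (insert v L) := by
  rw [(Equiv.swap (f - 1) (f + 1)).bijective.existsUnique_iff]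
  simp only [pairsThen_insert_pair_iff_swap hL hcard haf, Equiv.swap_apply_self]

theorem existsUnique_insert_iff (hF : F ⊆ Icc (a + 1) n) (hcard : #F = 2 * m + 3)
    (hn : a + 2 * m + 4 ≤ n) :
    (∃! v, PairsThen (blockTails n) m (a + 1) (insert v F)) ↔
      PairsThen (boundaryTails n) m (a + 1) F ∨ PairsThen (blockTails n) m a (insert a F) := by
  induction m generalizing a F with
  | zero => exact existsUnique_insert_iff_of_card_eq_three hF hcard hn
  | succ m ih =>
  obtain ⟨f, R, hfR, hR, rfl⟩ := exists_forall_lt_eq_insert (card_pos.1 (by omega : 0 < #F))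
  obtain ⟨g, L, hgL, hL, rfl⟩ := exists_forall_lt_eq_insert (card_pos.1 (by omega : 0 < #R))
  have haf : a + 1 ≤ f := (mem_Icc.1 (hF (mem_insert_self f _))).1
  have hfg : f + 1 ≤ g := hfR g (mem_insert_self g L)
  rcases eq_or_lt_of_le hfg with rfl | hfg
  · have hcard_L : #L = 2 * m + 3 := by omega
    have hL_Icc : L ⊆ Icc (f + 2) n := fun x hx =>
      mem_Icc.2 ⟨hgL x hx, (mem_Icc.1 (hF (by simp [hx]))).2⟩
    have := add_card_le_of_subset_Icc hL_Icc (card_pos.1 (by omega))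
    rw [PairsThen.succ_insert_insert_iff hgL, and_iff_right haf]
    rcases eq_or_lt_of_le haf with rfl | haf
    · simp only [pairsThen_insert_pair_iff hgL hcard_L]
      rw [ih hL_Icc hcard_L (by omega), PairsThen.succ_insert_insert_iff (by grind),
        and_iff_right le_rfl]
    · have hL_Icc' : L ⊆ Icc (f + 1) n := hL_Icc.trans (Icc_subset_Icc_left (by omega))
      rw [existsUnique_insert_pair_iff hgL hcard_L haf, ih hL_Icc' hcard_L (by omega),
        PairsThen.iff_of_forall_le (Nat.le_succ _) hgL,
        or_iff_left (not_pairsThen_blockTails_insert_of_gap hgL),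
        or_iff_left (not_pairsThen_blockTails_insert_of_gap (by grind))]
  · rw [existsUnique_insert_iff_of_gap (by grind) haf,
      or_iff_right (PairsThen.not_succ_insert_of_gap (by grind))]

end Ridges

lemma gammaFacet_iff_pairsThen {n m : ℕ} {G : Finset ℕ} :
    GammaFacet n (m + 1) (fun t => if t.val = m then 4 else 2) G ↔
      PairsThen (blockTails n) m 1 G := by
  have val_ne (j : Fin m) : (j : ℕ) ≠ m := j.isLt.ne
  have biUnion_eq (u : Fin m → ℕ) (s : ℕ) :
      (univ.biUnion fun t : Fin (m + 1) => Ico (Fin.snoc (α := fun _ => ℕ) u s t)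
        (Fin.snoc (α := fun _ => ℕ) u s t + if t.val = m then 4 else 2)) =
      (univ.biUnion fun j => {u j, u j + 1}) ∪ {s, s + 1, s + 2, s + 3} := by
    ext x
    simp only [mem_biUnion, mem_univ, true_and, Fin.exists_fin_succ', mem_union, mem_Ico,
      mem_insert, mem_singleton, Fin.val_castSucc, val_ne, if_false, Fin.val_last, if_true,
      Fin.snoc_castSucc, Fin.snoc_last]
    refine or_congr (exists_congr fun j => ?_) ?_ <;> omega
  rw [pairsThen_blockTails_iff]
  constructor
  · rintro ⟨st, bounds, separated, rfl⟩
    obtain ⟨u, s, rfl⟩ : ∃ (u : Fin m → ℕ) (s : ℕ), Fin.snoc (α := fun _ => ℕ) u s = st :=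
      ⟨Fin.init st, st (Fin.last m), Fin.snoc_init_self st⟩
    simp only [Fin.forall_fin_succ', Fin.snoc_castSucc, Fin.snoc_last, Fin.val_castSucc, val_ne,
      Fin.val_last, if_true, if_false] at bounds separated
    refine ⟨s, by omega, by omega, _, ⟨u, fun j => ?_, fun j j' h => ?_, rfl⟩, biUnion_eq u s⟩
    · have := bounds.1 j
      have := (separated.1 j).2 (Fin.castSucc_lt_last j)
      omega
    · exact (separated.1 j).1 j' h
  · rintro ⟨s, hs, hsn, _, ⟨u, bounds, separated, rfl⟩, rfl⟩
    refine ⟨Fin.snoc u s, ?_, ?_, (biUnion_eq u s).symm⟩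
    all_goals simp only [Fin.forall_fin_succ', Fin.snoc_castSucc, Fin.snoc_last, Fin.val_castSucc,
      val_ne, Fin.val_last, if_true, if_false]
    · exact ⟨fun j => by have := bounds j; omega, by omega⟩
    · refine ⟨fun j => ⟨separated j, fun _ => ?_⟩, by simp [Fin.le_last]⟩
      have := bounds j
      omega

lemma pairsThen_boundaryTails_one_iff {n m : ℕ} {F : Finset ℕ} :
    PairsThen (boundaryTails n) (m + 1) 1 F ↔
      (∃ i, i + 3 ≤ n ∧ ∃ τ, BFacet 1 (i - 1) (m + 1) τ ∧ F = τ ∪ {i, i + 1, i + 3}) ∨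
      (∃ i, i + 3 ≤ n ∧ ∃ τ, BFacet 1 (i - 1) (m + 1) τ ∧ F = τ ∪ {i, i + 2, i + 3}) ∨
      (∃ τ, BFacet 1 (n - 3) (m + 1) τ ∧ F = τ ∪ {n - 2, n - 1, n}) := by
  have pos_of_bFacet {b : ℕ} {τ : Finset ℕ} (hτ : BFacet 1 b (m + 1) τ) : 1 ≤ b := by
    obtain ⟨u, bounds, -⟩ := hτ
    exact le_of_add_le_right (bounds 0).2
  rw [pairsThen_boundaryTails_iff]
  refine or_congr (exists_congr fun i => ?_) (or_congr (exists_congr fun i => ?_) ?_)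
  · exact and_iff_right_of_imp fun ⟨_, τ, hτ, _⟩ => by have := pos_of_bFacet hτ; omega
  · exact and_iff_right_of_imp fun ⟨_, τ, hτ, _⟩ => by have := pos_of_bFacet hτ; omega
  · constructor
    · rintro ⟨s, -, rfl, τ, hτ, rfl⟩
      exact ⟨τ, hτ, rfl⟩
    · rintro ⟨τ, hτ, rfl⟩
      have := pos_of_bFacet hτ
      obtain ⟨s, rfl⟩ : ∃ s, n = s + 2 := ⟨n - 2, by omega⟩
      exact ⟨s, by omega, rfl, τ, hτ, rfl⟩

lemma pairsThen_blockTails_insert_zero_iff {n m : ℕ} {F : Finset ℕ} (hF : ∀ x ∈ F, 0 < x) :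
    PairsThen (blockTails n) (m + 1) 0 (insert 0 F) ↔
      ∃ i, 2 ≤ i ∧ i ≤ n - 3 ∧
        ∃ τ, BFacet 2 (i - 1) m τ ∧ F = τ ∪ {1, i, i + 1, i + 2, i + 3} := by
  rw [PairsThen.succ_insert_iff hF, and_iff_right le_rfl]
  simp only [pairsThen_blockTails_iff, zero_add]
  constructor
  · rintro ⟨_, ⟨i, hi, hin, τ, hτ, rfl⟩, rfl⟩
    exact ⟨i, hi, by omega, τ, hτ, (union_insert 1 τ _).symm⟩
  · rintro ⟨i, hi, hin, τ, hτ, rfl⟩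
    exact ⟨_, ⟨i, hi, by omega, τ, hτ, rfl⟩, union_insert 1 τ _⟩

theorem stmt_12 (k n : ℕ) (hk : 2 ≤ k) (hn : 2 * k + 2 ≤ n)
    (F : Finset ℕ) (hF : F ⊆ Finset.Icc 1 n) (hcard : F.card = 2 * k + 1) :
    (∃! G : Finset ℕ,
        GammaFacet n k (fun t => if t.val = k - 1 then 4 else 2) G ∧ F ⊆ G) ↔
      ((∃ i : ℕ, i + 3 ≤ n ∧
          ∃ τ : Finset ℕ, BFacet 1 (i - 1) (k - 1) τ ∧ F = τ ∪ {i, i + 1, i + 3}) ∨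
       (∃ i : ℕ, i + 3 ≤ n ∧
          ∃ τ : Finset ℕ, BFacet 1 (i - 1) (k - 1) τ ∧ F = τ ∪ {i, i + 2, i + 3}) ∨
       (∃ τ : Finset ℕ, BFacet 1 (n - 3) (k - 1) τ ∧ F = τ ∪ {n - 2, n - 1, n}) ∨
       (∃ i : ℕ, 2 ≤ i ∧ i ≤ n - 3 ∧
          ∃ τ : Finset ℕ, BFacet 2 (i - 1) (k - 2) τ ∧
            F = τ ∪ {1, i, i + 1, i + 2, i + 3})) := by
  obtain ⟨m, rfl⟩ : ∃ m, k = m + 2 := ⟨k - 2, by omega⟩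
  have card_facet (G : Finset ℕ) (hG : PairsThen (blockTails n) (m + 1) 1 G) : #G = #F + 1 := by
    rw [card_of_pairsThen_blockTails hG, hcard]
    ring
  have pos_of_mem (x : ℕ) (hx : x ∈ F) : 0 < x := (mem_Icc.1 (hF hx)).1
  simp only [Nat.add_sub_cancel, show m + 2 - 1 = m + 1 from rfl, gammaFacet_iff_pairsThen]
  rw [existsUnique_superset_iff_existsUnique_insert_s12 card_facet,
    existsUnique_insert_iff (a := 0) hF (by omega) (by omega),
    pairsThen_boundaryTails_one_iff, pairsThen_blockTails_insert_zero_iff pos_of_mem,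
    or_assoc, or_assoc]
end

section
/- For every integer k ≥ 2 there exists a constant C > 0 such that for all n ≥ 2k+1, the transversal number of (the set of facets of) D(n,2k−1) satisfies n/2 − C ≤ T(D(n,2k−1)) ≤ n/2 + C. -/
/-- The transversal number of the set of facets of `D(n, 2k-1)`: facets are the
`2k`-element subsets of `[n]` contained in exactly one facet of `Γ^J_n`,
where `J = (2,…,2,3)` has `k-1` entries `2` followed by one entry `3`. -/
noncomputable def DOddTransNum (n k : ℕ) : ℕ :=
  sInf {c : ℕ | ∃ S : Finset ℕ, S ⊆ Finset.Icc 1 n ∧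
    (∀ F : Finset ℕ, F ⊆ Finset.Icc 1 n → F.card = 2 * k →
      (∃! G : Finset ℕ,
        GammaFacet n k (fun t => if t.val = k - 1 then 3 else 2) G ∧ F ⊆ G) →
      (S ∩ F).Nonempty) ∧ S.card = c}

/-!
Upper bound: each of the `k ≥ 2` intervals of a facet of `Γ` contains an even number, and a facet
of `D` misses only one point of such a facet, so the even numbers form a transversal.

Lower bound: cut `[n]` into blocks of four consecutive integers. If `S` has few elements, then some
`k` blocks contain at most one element of `S` each. Such a block contains both a pair `s, s + 1` and
a pair `s, s + 2` avoiding `S`. Pairs of the first kind in `k - 1` of these blocks and one of the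
second kind in the last block form a `2k`-set that avoids `S`; it is a facet of `D` because deleting
an interior point of the last interval of a facet of `Γ` leaves a set in no other facet.
-/

section

open Finset

variable {n m r : ℕ}

/-- The union of the intervals of length `J t` starting at `st t`, i.e. the set `I_1 ∪ … ∪ I_m`
determined by the starting points of the `I_t`. -/
def intervalUnion (J st : Fin m → ℕ) : Finset ℕ :=
  univ.biUnion fun t => Ico (st t) (st t + J t)

/-- The starting points `st` place intervals of lengths `J` inside `[n]`, disjointly and from left
to right. -/
structure IsPlacement (n : ℕ) (J st : Fin m → ℕ) : Prop where
  one_le : ∀ t, 1 ≤ st t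
  add_le : ∀ t, st t + J t ≤ n + 1
  add_le_of_lt : ∀ ⦃t t' : Fin m⦄, t < t' → st t + J t ≤ st t'

theorem gammaFacet_iff {J : Fin m → ℕ} {G : Finset ℕ} :
    GammaFacet n m J G ↔ ∃ st, IsPlacement n J st ∧ G = intervalUnion J st :=
  ⟨fun ⟨st, hmem, hlt, hG⟩ =>
      ⟨st, ⟨fun t => (hmem t).1, fun t => (hmem t).2, fun t t' => hlt t t'⟩, hG⟩,
    fun ⟨st, h, hG⟩ => ⟨st, fun t => ⟨h.one_le t, h.add_le t⟩, fun _ _ ht => h.add_le_of_lt ht, hG⟩⟩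

theorem mem_intervalUnion {J st : Fin m → ℕ} {x : ℕ} :
    x ∈ intervalUnion J st ↔ ∃ t, st t ≤ x ∧ x < st t + J t := by
  simp [intervalUnion]

namespace IsPlacement

theorem intervalUnion_subset_Icc {J st : Fin m → ℕ} (h : IsPlacement n J st) :
    intervalUnion J st ⊆ Icc 1 n := by
  intro x hx
  obtain ⟨t, hle, hlt⟩ := mem_intervalUnion.1 hx
  have := h.one_le t
  have := h.add_le t
  exact mem_Icc.2 (by omega)

theorem card_intervalUnion {J st : Fin m → ℕ} (h : IsPlacement n J st) :
    #(intervalUnion J st) = ∑ t, J t := by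
  rw [intervalUnion, card_biUnion]
  · simp
  · intro t _ t' _ hne
    rw [Function.onFun, disjoint_left]
    intro x hx hx'
    rw [mem_Ico] at hx hx'
    rcases hne.lt_or_gt with hlt | hlt <;> have := h.add_le_of_lt hlt <;> omega

theorem lt_last_add {J st : Fin (r + 1) → ℕ} (h : IsPlacement n J st) {x : ℕ}
    (hx : x ∈ intervalUnion J st) : x < st (Fin.last r) + J (Fin.last r) := by
  obtain ⟨t, -, hlt⟩ := mem_intervalUnion.1 hx
  rcases (Fin.le_last t).eq_or_lt with rfl | ht
  · exact hlt
  · have := h.add_le_of_lt ht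
    omega

/-- If the last interval of the other facet started to the right of `x`, its last two points would
both lie beyond the original facet, which is only one point larger than the erased set. -/
theorem mem_of_erase_subset {J st st' : Fin (r + 1) → ℕ} (h : IsPlacement n J st)
    (h' : IsPlacement n J st') {x : ℕ} (hle : st (Fin.last r) < x)
    (hlt : x + 1 < st (Fin.last r) + J (Fin.last r))
    (hsub : (intervalUnion J st).erase x ⊆ intervalUnion J st') : x ∈ intervalUnion J st' := by
  set a := st (Fin.last r)
  set a' := st' (Fin.last r)
  set l := J (Fin.last r)
  have hx : x ∈ intervalUnion J st := mem_intervalUnion.2 ⟨Fin.last r, by omega, by omega⟩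
  have mem_last : ∀ y, a' ≤ y → y < a' + l → y ∈ intervalUnion J st' :=
    fun y hy hy' => mem_intervalUnion.2 ⟨Fin.last r, hy, hy'⟩
  have htop : a + l - 1 ∈ (intervalUnion J st).erase x :=
    mem_erase.2 ⟨by omega, mem_intervalUnion.2 ⟨Fin.last r, by omega, by omega⟩⟩
  have ha_le : a + l - 1 < a' + l := h'.lt_last_add (hsub htop)
  by_contra hx'
  have hx_lt : x < a' := by
    by_contra! hle'
    exact hx' (mem_last x hle' (by omega))
  have notMem_erase : ∀ y, a + l ≤ y → y ∉ (intervalUnion J st).erase x :=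
    fun y hy hmem => (h.lt_last_add (mem_of_mem_erase hmem)).not_ge hy
  have htwo : {a' + l - 2, a' + l - 1} ⊆ intervalUnion J st' \ (intervalUnion J st).erase x := by
    intro y hy
    have hy' : y = a' + l - 2 ∨ y = a' + l - 1 := by simpa using hy
    exact mem_sdiff.2 ⟨mem_last y (by omega) (by omega), notMem_erase y (by omega)⟩
  have hcard := card_le_card htwo
  rw [card_pair (by omega), card_sdiff_of_subset hsub, card_erase_of_mem hx,
    h.card_intervalUnion, h'.card_intervalUnion] at hcard
  omega

theorem existsUnique_gammaFacet_erase_subset {J st : Fin (r + 1) → ℕ} (h : IsPlacement n J st)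
    {x : ℕ} (hle : st (Fin.last r) < x) (hlt : x + 1 < st (Fin.last r) + J (Fin.last r)) :
    ∃! G, GammaFacet n (r + 1) J G ∧ (intervalUnion J st).erase x ⊆ G := by
  refine ⟨intervalUnion J st, ⟨gammaFacet_iff.2 ⟨st, h, rfl⟩, erase_subset _ _⟩, ?_⟩
  rintro H ⟨hH, hsub⟩
  obtain ⟨st', h', rfl⟩ := gammaFacet_iff.1 hH
  have hx : x ∈ intervalUnion J st' := h.mem_of_erase_subset h' hle hlt hsub
  refine (eq_of_subset_of_card_le ?_ ?_).symm
  · exact (subset_insert_iff.2 hsub).trans (insert_subset hx Subset.rfl)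
  · rw [h.card_intervalUnion, h'.card_intervalUnion]

theorem le_card_filter_even {J st : Fin m → ℕ} (h : IsPlacement n J st) (hJ : ∀ t, 2 ≤ J t) :
    m ≤ #{x ∈ intervalUnion J st | Even x} := by
  have hmono : StrictMono fun t => st t + st t % 2 := by
    intro t t' ht
    have := h.add_le_of_lt ht
    have := hJ t
    dsimp only
    omega
  calc m = #(univ : Finset (Fin m)) := by simp
    _ ≤ _ := card_le_card_of_injOn _ (fun t _ => ?_) hmono.injective.injOn
  have := hJ t
  rw [mem_coe, mem_filter, Nat.even_iff, mem_intervalUnion]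
  exact ⟨⟨t, by omega, by omega⟩, by omega⟩

theorem exists_even_mem {J st : Fin m → ℕ} (h : IsPlacement n J st) (hJ : ∀ t, 2 ≤ J t)
    {F : Finset ℕ} (hF : F ⊆ intervalUnion J st) (hcard : ∑ t, J t < #F + m) :
    ∃ x ∈ F, Even x := by
  by_contra! hodd
  have hsub : F ⊆ {x ∈ intervalUnion J st | ¬ Even x} :=
    fun x hx => mem_filter.2 ⟨hF hx, hodd x hx⟩
  have := card_le_card hsub
  have := h.le_card_filter_even hJ
  have := card_filter_add_card_filter_not (s := intervalUnion J st) fun x => Even x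
  have := h.card_intervalUnion
  omega

end IsPlacement

theorem mul_card_filter_fiber_le_card {α β : Type*} [DecidableEq β] (f : α → β) (s : Finset α)
    (t : Finset β) (c : ℕ) : c * #{b ∈ t | c ≤ #{a ∈ s | f a = b}} ≤ #s := by
  set u := {b ∈ t | c ≤ #{a ∈ s | f a = b}}
  calc c * #u = #u • c := by rw [smul_eq_mul, mul_comm]
    _ ≤ ∑ b ∈ u, #{a ∈ s | f a = b} := card_nsmul_le_sum _ _ _ fun b hb => (mem_filter.1 hb).2
    _ = #{a ∈ s | f a ∈ u} := sum_card_fiberwise_eq_card_filter ..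
    _ ≤ #s := card_filter_le _ _

/-- The blocks `{4b, …, 4b+3} ⊆ [n]`, given by their indices `b`, that contain at most one element
of `S`. The lower bound finds facets of `D(n, 2k-1)` avoiding `S` inside such blocks. -/
def sparseBlocks (n : ℕ) (S : Finset ℕ) : Finset ℕ :=
  {b ∈ Ico 1 ((n + 1) / 4) | #{x ∈ S | x / 4 = b} ≤ 1}

theorem le_two_mul_card_add_sparseBlocks (n : ℕ) (S : Finset ℕ) :
    n ≤ 2 * #S + 4 * #(sparseBlocks n S) + 6 := by
  have hdense := mul_card_filter_fiber_le_card (· / 4) S (Ico 1 ((n + 1) / 4)) 2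
  have hsplit : #(sparseBlocks n S) + #{b ∈ Ico 1 ((n + 1) / 4) | 2 ≤ #{x ∈ S | x / 4 = b}} =
      (n + 1) / 4 - 1 := by
    simpa only [sparseBlocks, not_le, Nat.card_Ico] using! card_filter_add_card_filter_not
      (s := Ico 1 ((n + 1) / 4)) fun b => #{x ∈ S | x / 4 = b} ≤ 1
  omega

/-- The first and the last interval of length `j` in a block of four have disjoint pairs of
endpoints, so one of these pairs avoids `S`. -/
theorem exists_endpoints_notMem {S : Finset ℕ} {b j : ℕ} (hb : #{x ∈ S | x / 4 = b} ≤ 1)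
    (hj : 0 < j) (hj' : j ≤ 3) :
    ∃ s, 4 * b ≤ s ∧ s + j ≤ 4 * b + 4 ∧ s ∉ S ∧ s + j - 1 ∉ S := by
  have eq_of_mem : ∀ x ∈ S, ∀ y ∈ S, x / 4 = b → y / 4 = b → x = y := fun x hx y hy hxb hyb =>
    card_le_one.1 hb x (mem_filter.2 ⟨hx, hxb⟩) y (mem_filter.2 ⟨hy, hyb⟩)
  by_contra! hmem
  have hfirst : ∃ x ∈ S, x = 4 * b ∨ x = 4 * b + j - 1 := by
    by_cases h : 4 * b ∈ S
    · exact ⟨_, h, Or.inl rfl⟩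
    · exact ⟨_, hmem (4 * b) le_rfl (by omega) h, Or.inr rfl⟩
  have hlast : ∃ y ∈ S, y = 4 * b + 4 - j ∨ y = 4 * b + 4 - j + j - 1 := by
    by_cases h : 4 * b + 4 - j ∈ S
    · exact ⟨_, h, Or.inl rfl⟩
    · exact ⟨_, hmem (4 * b + 4 - j) (by omega) (by omega) h, Or.inr rfl⟩
  obtain ⟨x, hxS, hx⟩ := hfirst
  obtain ⟨y, hyS, hy⟩ := hlast
  have := eq_of_mem x hxS y hyS (by omega) (by omega)
  omega

theorem exists_isPlacement_endpoints_notMem {S : Finset ℕ} {J : Fin m → ℕ} (hJ : ∀ t, 0 < J t)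
    (hJ' : ∀ t, J t ≤ 3) (hm : m ≤ #(sparseBlocks n S)) :
    ∃ st, IsPlacement n J st ∧ ∀ t, st t ∉ S ∧ st t + J t - 1 ∉ S := by
  let b := (sparseBlocks n S).orderEmbOfCardLe hm
  have hb : ∀ t, (1 ≤ b t ∧ b t < (n + 1) / 4) ∧ #{x ∈ S | x / 4 = b t} ≤ 1 := fun t => by
    have hmem : b t ∈ sparseBlocks n S := orderEmbOfCardLe_mem _ hm t
    simpa only [sparseBlocks, mem_filter, mem_Ico] using hmem
  choose st hst_ge hst_le hst using fun t => exists_endpoints_notMem (hb t).2 (hJ t) (hJ' t)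
  refine ⟨st, ⟨fun t => ?_, fun t => ?_, fun t t' ht => ?_⟩, hst⟩
  · linarith [hst_ge t, (hb t).1.1]
  · have := hst_le t
    have := (hb t).1.2
    omega
  · have : b t < b t' := b.strictMono ht
    linarith [hst_le t, hst_ge t']

/-- The tuple `J = (2, …, 2, 3)` with `k` entries. -/
def oddSizes (k : ℕ) : Fin k → ℕ := fun t => if t.val = k - 1 then 3 else 2

theorem two_le_oddSizes (k : ℕ) (t : Fin k) : 2 ≤ oddSizes k t := by
  unfold oddSizes
  split_ifs <;> omega

theorem oddSizes_le_three (k : ℕ) (t : Fin k) : oddSizes k t ≤ 3 := by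
  unfold oddSizes
  split_ifs <;> omega

theorem oddSizes_castSucc (r : ℕ) (t : Fin r) : oddSizes (r + 1) t.castSucc = 2 := by
  simp [oddSizes, t.isLt.ne]

theorem oddSizes_last (r : ℕ) : oddSizes (r + 1) (Fin.last r) = 3 := by
  simp [oddSizes]

theorem sum_oddSizes (r : ℕ) : ∑ t, oddSizes (r + 1) t = 2 * (r + 1) + 1 := by
  simp only [Fin.sum_univ_castSucc, oddSizes_castSucc, oddSizes_last, sum_const, card_univ,
    Fintype.card_fin, smul_eq_mul]
  ring

/-- The facets of `D(n, 2k-1)`. -/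
def oddFacets (n k : ℕ) : Set (Finset ℕ) :=
  {F | F ⊆ Icc 1 n ∧ #F = 2 * k ∧ ∃! G, GammaFacet n k (oddSizes k) G ∧ F ⊆ G}

/-- `S` is a transversal of the family `𝓕`. Confinement of `S` to the ground set is not part of the
definition. -/
def IsTransversal {α : Type*} [DecidableEq α] (𝓕 : Set (Finset α)) (S : Finset α) : Prop :=
  ∀ F ∈ 𝓕, (S ∩ F).Nonempty

theorem dOddTransNum_eq_sInf (n k : ℕ) :
    DOddTransNum n k = sInf {c | ∃ S ⊆ Icc 1 n, IsTransversal (oddFacets n k) S ∧ #S = c} := by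
  simp only [IsTransversal, oddFacets, Set.mem_ofPred_eq, and_imp]
  rfl

theorem isTransversal_Icc (n : ℕ) {k : ℕ} (hk : 0 < k) :
    IsTransversal (oddFacets n k) (Icc 1 n) := by
  rintro F ⟨hF, hcard, -⟩
  rw [inter_eq_right.2 hF, ← card_pos]
  omega

theorem isTransversal_even (n : ℕ) {k : ℕ} (hk : 2 ≤ k) :
    IsTransversal (oddFacets n k) {x ∈ Icc 1 n | Even x} := by
  rintro F ⟨hF, hcard, G, ⟨hG, hFG⟩, -⟩
  obtain ⟨st, hst, rfl⟩ := gammaFacet_iff.1 hG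
  obtain ⟨r, rfl⟩ : ∃ r, k = r + 1 := ⟨k - 1, by omega⟩
  obtain ⟨x, hxF, hx⟩ := hst.exists_even_mem (two_le_oddSizes _) hFG
    (by rw [sum_oddSizes, hcard]; omega)
  exact ⟨x, mem_inter.2 ⟨mem_filter.2 ⟨hF hxF, hx⟩, hxF⟩⟩

theorem erase_mem_oddFacets {st : Fin (r + 1) → ℕ} (h : IsPlacement n (oddSizes (r + 1)) st) :
    (intervalUnion (oddSizes (r + 1)) st).erase (st (Fin.last r) + 1) ∈ oddFacets n (r + 1) := by
  have hlast := oddSizes_last r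
  refine ⟨(erase_subset _ _).trans h.intervalUnion_subset_Icc, ?_,
    h.existsUnique_gammaFacet_erase_subset (by omega) (by omega)⟩
  rw [card_erase_of_mem (mem_intervalUnion.2 ⟨Fin.last r, by omega, by omega⟩),
    h.card_intervalUnion, sum_oddSizes, Nat.add_sub_cancel]

theorem IsTransversal.card_sparseBlocks_le {S : Finset ℕ}
    (hS : IsTransversal (oddFacets n (r + 1)) S) : #(sparseBlocks n S) ≤ r := by
  by_contra! hlt
  obtain ⟨st, hst, havoid⟩ := exists_isPlacement_endpoints_notMem
    (fun t => two_pos.trans_le (two_le_oddSizes (r + 1) t)) (oddSizes_le_three _) hlt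
  obtain ⟨x, hx⟩ := hS _ (erase_mem_oddFacets hst)
  obtain ⟨hxS, hx_ne, hxG⟩ : x ∈ S ∧ x ≠ _ ∧ x ∈ intervalUnion _ st := by simpa using hx
  obtain ⟨t, ht_le, ht_lt⟩ := mem_intervalUnion.1 hxG
  have hend : x = st t ∨ x = st t + oddSizes (r + 1) t - 1 := by
    cases t using Fin.lastCases with
    | last => have := oddSizes_last r; omega
    | cast t => have := oddSizes_castSucc r t; omega
  rcases hend with rfl | rfl
  · exact (havoid t).1 hxS
  · exact (havoid t).2 hxS

theorem card_filter_even_Icc_one (n : ℕ) : #{x ∈ Icc 1 n | Even x} = n / 2 := by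
  simpa only [even_iff_two_dvd] using! Nat.Ioc_filter_dvd_card_eq_div n 2

theorem dOddTransNum_le (n : ℕ) {k : ℕ} (hk : 2 ≤ k) : DOddTransNum n k ≤ n / 2 := by
  rw [dOddTransNum_eq_sInf]
  exact Nat.sInf_le ⟨_, filter_subset _ _, isTransversal_even n hk, card_filter_even_Icc_one n⟩

theorem le_two_mul_dOddTransNum_add (n : ℕ) {k : ℕ} (hk : 0 < k) :
    n ≤ 2 * DOddTransNum n k + 4 * k + 2 := by
  obtain ⟨S, -, hS, hcard⟩ := Nat.sInf_mem
    (s := {c | ∃ S ⊆ Icc 1 n, IsTransversal (oddFacets n k) S ∧ #S = c})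
    ⟨_, _, Subset.rfl, isTransversal_Icc n hk, rfl⟩
  rw [← dOddTransNum_eq_sInf] at hcard
  obtain ⟨r, rfl⟩ : ∃ r, k = r + 1 := ⟨k - 1, by omega⟩
  have := hS.card_sparseBlocks_le
  have := le_two_mul_card_add_sparseBlocks n S
  omega

end

theorem stmt_14 (k : ℕ) (hk : 2 ≤ k) :
    ∃ C : ℝ, 0 < C ∧ ∀ n : ℕ, 2 * k + 1 ≤ n →
      (n : ℝ) / 2 - C ≤ (DOddTransNum n k : ℝ) ∧
      (DOddTransNum n k : ℝ) ≤ (n : ℝ) / 2 + C := by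
  refine ⟨2 * k + 1, by positivity, fun n _ => ?_⟩
  have hlower : (n : ℝ) ≤ 2 * DOddTransNum n k + 4 * k + 2 := by
    exact_mod_cast le_two_mul_dOddTransNum_add n (two_pos.trans_le hk)
  have hupper : (DOddTransNum n k : ℝ) ≤ n / 2 :=
    (Nat.cast_le.2 (dOddTransNum_le n hk)).trans Nat.cast_div_le
  constructor <;> linarith
end

section
/- For every integer k ≥ 1 there exists a constant C > 0 (depending only on k) such that the following holds for every positive integer n: if F is a family of 5-element subsets of [n] that contains all sets of the forms (a) {i, i+1, j, j+1, j+3} for all i ≥ 1 and all j with i+k+1 < j ≤ n−3, (b) {i, i+1, j, j+2, j+3} for all i ≥ 1 and all j with i+k+2 < j ≤ n−3, (c) {i−k, i+1, i+2, i+4, i+5} for all i with k+1 ≤ i ≤ n−5, and (d) {i−ℓ, i−ℓ+1, i+1, i+4, i+5} for all ℓ with 1 ≤ ℓ ≤ k and all i with ℓ < i ≤ n−5, then every transversal of F has size at least ((k+5)/(2(k+6)))·n − C. -/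
/-!
Let `U` be the complement of a transversal in `[n]`, and let `i` be the least index such that `i`
and `i + 1` both lie in `U`. Below `i` no two elements of `U` are adjacent, so `U` has density at
most `1 / 2` there. The edges (a) and (b) through `{i, i + 1}` forbid the patterns `1101` and `1011`
in `U` beyond `i + k + 2`, and the edges (d) with `ℓ = 1` forbid `1110011` everywhere.

These three patterns force density at most `1 / 2`. Read `U` from left to right: a run of ones has
length at most three, and a run of length at least two has two zeros on either side. Thus only
`11100` has a surplus of ones, namely one. After it comes no `11` until some surplus zero has
occurred, because single ones separated by single zeros cannot lead into `11` (this would be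
`1011`). So the surplus never accumulates.
-/

open Finset

variable {p : ℕ → Prop}

/-- The indicator word of `p` has no occurrence, starting at a position `t ≥ a`, of the patterns
`1101`, `1011` and `1110011`. A one in a pattern demands membership, a zero demands nothing.
Complements of transversals have this property once `a` is well beyond a pair of adjacent
elements. -/
structure AvoidsPatternsFrom (p : ℕ → Prop) (a : ℕ) : Prop where
  not_1101 : ∀ t, a ≤ t → p t → p (t + 1) → ¬p (t + 3)
  not_1011 : ∀ t, a ≤ t → p t → p (t + 2) → ¬p (t + 3)
  not_1110011 : ∀ t, a ≤ t → p t → p (t + 1) → p (t + 2) → p (t + 5) → ¬p (t + 6)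

theorem count_add_le [DecidablePred p] (m d : ℕ) : Nat.count p (m + d) ≤ Nat.count p m + d := by
  rw [Nat.count_add]
  gcongr
  exact Nat.count_le _

theorem two_mul_count_le_succ_of_no_adjacent [DecidablePred p] {m : ℕ}
    (h : ∀ t, t + 1 < m → p t → ¬p (t + 1)) : 2 * Nat.count p m ≤ m + 1 := by
  induction m using Nat.twoStepInduction with
  | zero => simp
  | one => have : Nat.count p 1 ≤ 1 := Nat.count_le p; lia
  | more m ih _ =>
    have hm := ih fun t ht => h t (by lia)
    have hpair := h m (by lia)
    grind

namespace AvoidsPatternsFrom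

variable {a N t : ℕ} [DecidablePred p]

theorem count_of_not_adjacent (h : AvoidsPatternsFrom p a) (ha : a ≤ t)
    (hpair : ¬(p t ∧ p (t + 1))) :
    Nat.count p (t + 1) = Nat.count p t ∨
      Nat.count p (t + 2) = Nat.count p t + 1 ∧ ¬(p (t + 2) ∧ p (t + 3)) := by
  by_cases h0 : p t
  · have h1 : ¬p (t + 1) := fun h1 => hpair ⟨h0, h1⟩
    exact .inr ⟨by simp [Nat.count_succ, h0, h1], fun ⟨h2, h3⟩ => h.not_1011 t ha h0 h2 h3⟩
  · exact .inl (by simp [Nat.count_succ, h0])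

theorem count_of_adjacent (h : AvoidsPatternsFrom p a) (ha : a ≤ t) (h0 : p t) (h1 : p (t + 1)) :
    Nat.count p (t + 4) = Nat.count p t + 2 ∨
      Nat.count p (t + 5) = Nat.count p t + 3 ∧ ¬(p (t + 5) ∧ p (t + 6)) := by
  have h3 : ¬p (t + 3) := h.not_1101 t ha h0 h1
  by_cases h2 : p (t + 2)
  · have h4 : ¬p (t + 4) := h.not_1101 (t + 1) (by lia) h1 h2
    exact .inr ⟨by simp [Nat.count_succ, h0, h1, h2, h3, h4],
      fun ⟨h5, h6⟩ => h.not_1110011 t ha h0 h1 h2 h5 h6⟩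
  · exact .inl (by simp [Nat.count_succ, h0, h1, h2, h3])

-- The two bounds carry each other: a block `11100` costs the slack between them, and the next
-- surplus zero recovers it. The range `t ≤ N + 4` admits a last block overhanging `N`.
theorem two_mul_count_add_le_and (h : AvoidsPatternsFrom p a) (ha : a ≤ t) (ht : t ≤ N + 4) :
    2 * Nat.count p N + t ≤ 2 * Nat.count p t + N + 5 ∧
      (¬(p t ∧ p (t + 1)) → 2 * Nat.count p N + t ≤ 2 * Nat.count p t + N + 4) := by
  induction hd : N + 4 - t using Nat.strong_induction_on generalizing t with
  | _ d ih =>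
  obtain hNt | htN := le_or_gt N t
  · have := Nat.count_monotone p hNt
    lia
  have later (s : ℕ) (hs : 0 < s) (hs5 : s ≤ 5) :=
    ih (N + 4 - (t + s)) (by lia) (t := t + s) (by lia) (by lia) rfl
  by_cases hpair : p t ∧ p (t + 1)
  · refine ⟨?_, fun hn => absurd hpair hn⟩
    obtain hcount | ⟨hcount, hnext⟩ := h.count_of_adjacent ha hpair.1 hpair.2
    · have := (later 4 (by lia) (by lia)).1
      lia
    · have := (later 5 (by lia) (by lia)).2 hnext
      lia
  · suffices 2 * Nat.count p N + t ≤ 2 * Nat.count p t + N + 4 from ⟨by lia, fun _ => this⟩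
    obtain hcount | ⟨hcount, hnext⟩ := h.count_of_not_adjacent ha hpair
    · have := (later 1 (by lia) (by lia)).1
      lia
    · have := (later 2 (by lia) (by lia)).2 hnext
      lia

theorem two_mul_count_le (h : AvoidsPatternsFrom p a) (N : ℕ) :
    2 * Nat.count p N ≤ 2 * Nat.count p a + (N - a) + 5 := by
  obtain haN | hNa := le_total a N
  · have := (h.two_mul_count_add_le_and le_rfl (haN.trans (Nat.le_add_right N 4))).1
    lia
  · have := Nat.count_monotone p hNa
    lia

end AvoidsPatternsFrom

theorem two_mul_count_le_of_adjacent_imp_avoidsPatternsFrom [DecidablePred p] {d : ℕ}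
    (h : ∀ i, p i → p (i + 1) → AvoidsPatternsFrom p (i + d)) (N : ℕ) :
    2 * Nat.count p N ≤ N + 2 * d + 6 := by
  by_cases hadj : ∃ i, i + 1 < N ∧ p i ∧ p (i + 1)
  · obtain ⟨i, hmin⟩ := exists_minimal_of_wellFoundedLT _ hadj
    obtain ⟨hiN, hi, hi'⟩ := hmin.prop
    have before : 2 * Nat.count p i ≤ i + 1 := two_mul_count_le_succ_of_no_adjacent
      fun t hti ht ht' => hmin.not_prop_of_lt (by lia) ⟨by lia, ht, ht'⟩
    have gap : Nat.count p (i + d) ≤ Nat.count p i + d := count_add_le i d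
    have after : 2 * Nat.count p N ≤ 2 * Nat.count p (i + d) + (N - (i + d)) + 5 :=
      (h i hi hi').two_mul_count_le N
    lia
  · have := two_mul_count_le_succ_of_no_adjacent (p := p) (m := N)
      fun t htN ht ht' => hadj ⟨t, htN, ht, ht'⟩
    lia

theorem count_mem_eq_card {U : Finset ℕ} {N : ℕ} (hU : U ⊆ range N) :
    Nat.count (· ∈ U) N = #U := by
  rw [Nat.count_eq_card_filter_range, filter_mem_eq_inter, inter_eq_right.2 hU]

theorem avoidsPatternsFrom_Icc_sdiff_transversal {k n i : ℕ} {F : Set (Finset ℕ)} {S : Finset ℕ}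
    (ha : ∀ j, i + k + 1 < j → j + 3 ≤ n → {i, i + 1, j, j + 1, j + 3} ∈ F)
    (hb : ∀ j, i + k + 2 < j → j + 3 ≤ n → {i, i + 1, j, j + 2, j + 3} ∈ F)
    (hd : ∀ t, 1 ≤ t → t + 6 ≤ n → {t, t + 1, t + 2, t + 5, t + 6} ∈ F)
    (hS : ∀ e ∈ F, (S ∩ e).Nonempty) (hi : i ∈ Icc 1 n \ S) (hi' : i + 1 ∈ Icc 1 n \ S) :
    AvoidsPatternsFrom (· ∈ Icc 1 n \ S) (i + (k + 3)) := by
  have not_subset {e : Finset ℕ} (he : e ∈ F) : ¬e ⊆ Icc 1 n \ S := fun hsub =>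
    (hS e he).ne_empty (disjoint_sdiff.mono_right hsub).eq_bot
  have bounds {x : ℕ} (hx : x ∈ Icc 1 n \ S) : 1 ≤ x ∧ x ≤ n := mem_Icc.1 (mem_sdiff.1 hx).1
  constructor
  · intro t hit h0 h1 h3
    refine not_subset (ha t (by lia) (bounds h3).2) ?_
    simp only [insert_subset_iff, singleton_subset_iff]
    exact ⟨hi, hi', h0, h1, h3⟩
  · intro t hit h0 h2 h3
    refine not_subset (hb t (by lia) (bounds h3).2) ?_
    simp only [insert_subset_iff, singleton_subset_iff]
    exact ⟨hi, hi', h0, h2, h3⟩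
  · intro t _ h0 h1 h2 h5 h6
    refine not_subset (hd t (bounds h0).1 (bounds h6).2) ?_
    simp only [insert_subset_iff, singleton_subset_iff]
    exact ⟨h0, h1, h2, h5, h6⟩

theorem stmt_19_general {k n : ℕ} {F : Set (Finset ℕ)} {S : Finset ℕ}
    (ha : ∀ i j, 1 ≤ i → i + k + 1 < j → j + 3 ≤ n → {i, i + 1, j, j + 1, j + 3} ∈ F)
    (hb : ∀ i j, 1 ≤ i → i + k + 2 < j → j + 3 ≤ n → {i, i + 1, j, j + 2, j + 3} ∈ F)
    (hd : ∀ t, 1 ≤ t → t + 6 ≤ n → {t, t + 1, t + 2, t + 5, t + 6} ∈ F)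
    (hS : ∀ e ∈ F, (S ∩ e).Nonempty) : (n : ℝ) / 2 - (k + 7) ≤ #S := by
  have hcount : 2 * #(Icc 1 n \ S) ≤ n + 1 + 2 * (k + 3) + 6 := by
    have hrange : Icc 1 n \ S ⊆ range (n + 1) := by grind
    rw [← count_mem_eq_card hrange]
    refine two_mul_count_le_of_adjacent_imp_avoidsPatternsFrom (fun i hi hi' => ?_) (n + 1)
    have hi1 : 1 ≤ i := (mem_Icc.1 (mem_sdiff.1 hi).1).1
    exact avoidsPatternsFrom_Icc_sdiff_transversal (ha i · hi1) (hb i · hi1) hd hS hi hi'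
  have hcard : n ≤ #(Icc 1 n \ S) + #S := by
    simpa using card_le_card_sdiff_add_card (s := Icc 1 n) (t := S)
  have hn : n ≤ 2 * #S + 2 * k + 13 := by lia
  have hn_real : (n : ℝ) ≤ 2 * #S + 2 * k + 13 := by exact_mod_cast hn
  linarith

theorem add_five_div_two_mul_add_six_le_half {x : ℝ} (hx : 0 ≤ x) :
    (x + 5) / (2 * (x + 6)) ≤ 1 / 2 := by
  rw [div_le_div_iff₀ (by positivity) two_pos]
  linarith

theorem stmt_19 (k : ℕ) (hk : 1 ≤ k) :
    ∃ C : ℝ, 0 < C ∧ ∀ n : ℕ, ∀ Fam : Finset (Finset ℕ),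
      (∀ e ∈ Fam, e ⊆ Finset.Icc 1 n ∧ e.card = 5) →
      (∀ i j : ℕ, 1 ≤ i → i + k + 1 < j → j + 3 ≤ n →
        ({i, i + 1, j, j + 1, j + 3} : Finset ℕ) ∈ Fam) →
      (∀ i j : ℕ, 1 ≤ i → i + k + 2 < j → j + 3 ≤ n →
        ({i, i + 1, j, j + 2, j + 3} : Finset ℕ) ∈ Fam) →
      (∀ i : ℕ, k + 1 ≤ i → i + 5 ≤ n →
        ({i - k, i + 1, i + 2, i + 4, i + 5} : Finset ℕ) ∈ Fam) →
      (∀ ℓ i : ℕ, 1 ≤ ℓ → ℓ ≤ k → ℓ < i → i + 5 ≤ n →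
        ({i - ℓ, i - ℓ + 1, i + 1, i + 4, i + 5} : Finset ℕ) ∈ Fam) →
      ∀ S : Finset ℕ, S ⊆ Finset.Icc 1 n → (∀ e ∈ Fam, (S ∩ e).Nonempty) →
        (((k : ℝ) + 5) / (2 * ((k : ℝ) + 6))) * (n : ℝ) - C ≤ (S.card : ℝ) := by
  refine ⟨k + 7, by positivity, fun n Fam _ ha hb _ hd S _ hS => ?_⟩
  have half : (n : ℝ) / 2 - (k + 7) ≤ #S := stmt_19_general (F := (Fam : Set (Finset ℕ))) ha hb
    (fun t ht htn => hd 1 (t + 1) le_rfl hk (by lia) (by lia)) hS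
  have hratio := add_five_div_two_mul_add_six_le_half (k.cast_nonneg (α := ℝ))
  linarith [mul_le_mul_of_nonneg_right hratio n.cast_nonneg]
end
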